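/- Let w ∈ W_n be a signed permutation. Let tw, wt ∈ W_n, so that the sequence (tw)⃗ is obtained from w⃗ = (w(1),…,w(n)) by changing the sign of the entry with absolute value 1, and (wt)⃗ is obtained from w⃗ by changing the sign of the first entry w(1). Then the partitions p(⁻w⃗), p(⁻(tw)⃗) and p(⁻(wt)⃗), viewed as Young diagrams, have the same number of even boxes in each row; that is, p(⁻w⃗)^ev = p(⁻(tw)⃗)^ev = p(⁻(wt)⃗)^ev. -/

import Mathlib

/-- Greene invariant `c_k(x)` of the length-`N` sequence `x` (positions `1,…,N`). -/
noncomputable def greeneC {α : Type*} [LinearOrder α] (N : ℕ) (x : ℕ → α) (k : ℕ) : ℕ :=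
  sSup {m : ℕ | ∃ S : Finset ℕ, (∀ i ∈ S, 1 ≤ i ∧ i ≤ N) ∧ m = S.card ∧
    ∃ f : ℕ → Fin k, ∀ i ∈ S, ∀ j ∈ S, i < j → f i = f j → x i ≤ x j}

/-- The Robinson–Schensted shape of `x`, via Greene's theorem:
`p(x)_k = c_k(x) − c_{k−1}(x)`. -/
noncomputable def rsShape {α : Type*} [LinearOrder α] (N : ℕ) (x : ℕ → α) (k : ℕ) : ℕ :=
  greeneC N x k - greeneC N x (k - 1)

/-- The number of even boxes in row `i` of the Young diagram of `p`:
boxes `(i,j)` with `1 ≤ j ≤ p i` and `i + j` even. -/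
def rowEv (p : ℕ → ℕ) (i : ℕ) : ℕ :=
  ((Finset.Icc 1 (p i)).filter fun j => Even (i + j)).card

/-- For a length-`n` sequence `x` (positions `1,…,n`), the length-`2n` sequence
`⁻x = (−x_n,…,−x_1,x_1,…,x_n)` (positions `1,…,2n`). -/
def preMinus (n : ℕ) (x : ℕ → ℤ) : ℕ → ℤ := fun i =>
  if i ≤ n then -x (n + 1 - i) else x (i - n)

/-- `w` is an element of the group `W_n` of signed permutations: a permutation of `ℤ`
with `w(−i) = −w(i)` mapping `{1,…,n}` into `{±1,…,±n}`. -/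
def IsSignedPerm (n : ℕ) (w : Equiv.Perm ℤ) : Prop :=
  (∀ i : ℤ, w (-i) = -w i) ∧ ∀ i : ℤ, 1 ≤ i → i ≤ (n : ℤ) → 1 ≤ |w i| ∧ |w i| ≤ (n : ℤ)


namespace Hollow

def IsFam (N : ℕ) (x : ℕ → ℤ) (k : ℕ) (S : Finset ℕ) (f : ℕ → ℕ) : Prop :=
  (∀ i ∈ S, 1 ≤ i ∧ i ≤ N) ∧ (∀ i ∈ S, f i < k) ∧
    ∀ i ∈ S, ∀ j ∈ S, i < j → f i = f j → x i ≤ x j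

lemma card_le_of_range {N : ℕ} {S : Finset ℕ} (h : ∀ i ∈ S, 1 ≤ i ∧ i ≤ N) : S.card ≤ N := by
  have : S ⊆ Finset.Icc 1 N := fun i hi => Finset.mem_Icc.2 (h i hi)
  simpa using Finset.card_le_card this

lemma greene_bdd (N : ℕ) (x : ℕ → ℤ) (k : ℕ) :
    BddAbove {m : ℕ | ∃ S : Finset ℕ, (∀ i ∈ S, 1 ≤ i ∧ i ≤ N) ∧ m = S.card ∧
    ∃ f : ℕ → Fin k, ∀ i ∈ S, ∀ j ∈ S, i < j → f i = f j → x i ≤ x j} := by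
  refine ⟨N, ?_⟩
  rintro m ⟨S, hS, rfl, -⟩
  exact card_le_of_range hS

lemma IsFam.le {N : ℕ} {x : ℕ → ℤ} {k : ℕ} {S : Finset ℕ} {f : ℕ → ℕ}
    (h : IsFam N x k S f) : S.card ≤ greeneC N x k := by
  rcases Nat.eq_zero_or_pos k with rfl | hk
  · have : S = ∅ := Finset.eq_empty_of_forall_notMem fun i hi => by
      have := h.2.1 i hi; omega
    simp [this]
  · refine le_csSup (greene_bdd N x k) ⟨S, h.1, rfl, fun i => ⟨f i % k, Nat.mod_lt _ hk⟩, ?_⟩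
    intro i hi j hj hij hf
    apply h.2.2 i hi j hj hij
    have := congrArg Fin.val hf
    simpa [Nat.mod_eq_of_lt (h.2.1 i hi), Nat.mod_eq_of_lt (h.2.1 j hj)] using this

lemma exists_fam (N : ℕ) (x : ℕ → ℤ) (k : ℕ) :
    ∃ S f, IsFam N x k S f ∧ S.card = greeneC N x k := by
  by_cases hk : k = 0
  · subst hk
    refine ⟨∅, id, ⟨by simp, by simp, by simp⟩, ?_⟩
    have : {m : ℕ | ∃ S : Finset ℕ, (∀ i ∈ S, 1 ≤ i ∧ i ≤ N) ∧ m = S.card ∧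
      ∃ f : ℕ → Fin 0, ∀ i ∈ S, ∀ j ∈ S, i < j → f i = f j → x i ≤ x j} = ∅ := by
      ext m
      simp only [Set.mem_ofPred_eq, Set.mem_empty_iff_false, iff_false]
      rintro ⟨S, -, -, f, -⟩
      exact (f 0).elim0
    simp [greeneC]
  · have hne : {m : ℕ | ∃ S : Finset ℕ, (∀ i ∈ S, 1 ≤ i ∧ i ≤ N) ∧ m = S.card ∧
      ∃ f : ℕ → Fin k, ∀ i ∈ S, ∀ j ∈ S, i < j → f i = f j → x i ≤ x j}.Nonempty :=
      ⟨0, ∅, by simp, by simp, fun _ => ⟨0, by omega⟩, by simp⟩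
    obtain ⟨S, hS, hc, f, hf⟩ := Nat.sSup_mem hne (greene_bdd N x k)
    refine ⟨S, fun i => f i, ⟨hS, fun i _ => (f i).2, ?_⟩, hc.symm⟩
    intro i hi j hj hij h
    exact hf i hi j hj hij (Fin.ext h)

/-- height functions -/
def Ht (k : ℕ) (h : ℕ → ℤ → ℤ) : Prop :=
  (∀ i j u v, i ≤ j → u ≤ v → h j u ≤ h i v) ∧ ∀ i v, 0 ≤ h i v ∧ h i v ≤ k

def ind (y x : ℤ) : ℕ := if y < x then 1 else 0

def cnt (x : ℕ → ℤ) (h : ℕ → ℤ → ℤ) (i : ℕ) : ℕ := ind (h i (x i - 1)) (h (i - 1) (x i))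

def Fv (N : ℕ) (x : ℕ → ℤ) (h : ℕ → ℤ → ℤ) : ℕ := ∑ i ∈ Finset.Icc 1 N, cnt x h i

lemma Fv_le {N k : ℕ} {x : ℕ → ℤ} {h : ℕ → ℤ → ℤ} (hh : Ht k h) : Fv N x h ≤ greeneC N x k := by
  have hF : Fv N x h = ((Finset.Icc 1 N).filter
      (fun i => h i (x i - 1) < h (i - 1) (x i))).card := by
    rw [Finset.card_filter]; rfl
  rw [hF]
  refine IsFam.le (f := fun i => (h i (x i - 1)).toNat) ⟨?_, ?_, ?_⟩
  · intro i hi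
    simpa using (Finset.mem_filter.1 hi).1
  · intro i hi
    have h1 := (Finset.mem_filter.1 hi).2
    have h2 := hh.2 i (x i - 1)
    have h3 := hh.2 (i - 1) (x i)
    simp only
    omega
  · intro i hi j hj hij he
    by_contra hlt
    have h1 := (Finset.mem_filter.1 hj).2
    have h2 := hh.2 i (x i - 1)
    have h3 := hh.2 j (x j - 1)
    have h4 := hh.1 i (j - 1) (x j) (x i - 1) (by omega) (by omega)
    simp only at he
    omega

/-- antitone subsets -/
def Dec (x : ℕ → ℤ) (T : Finset ℕ) : Prop := ∀ i ∈ T, ∀ j ∈ T, i < j → x j < x i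

open Classical in
noncomputable def hgt (x : ℕ → ℤ) (S : Finset ℕ) (i : ℕ) (v : ℤ) : ℕ :=
  (S.powerset.filter (fun T => Dec x T ∧ ∀ j ∈ T, i < j ∧ x j ≤ v)).sup Finset.card

lemma le_hgt {x : ℕ → ℤ} {S T : Finset ℕ} {i : ℕ} {v : ℤ} (hT : T ⊆ S) (hd : Dec x T)
    (hb : ∀ j ∈ T, i < j ∧ x j ≤ v) : T.card ≤ hgt x S i v := by
  classical
  unfold hgt
  refine Finset.le_sup (f := Finset.card) ?_
  simp only [Finset.mem_filter, Finset.mem_powerset]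
  exact ⟨hT, hd, hb⟩

lemma exists_hgt (x : ℕ → ℤ) (S : Finset ℕ) (i : ℕ) (v : ℤ) :
    ∃ T ⊆ S, Dec x T ∧ (∀ j ∈ T, i < j ∧ x j ≤ v) ∧ T.card = hgt x S i v := by
  classical
  have hne : (S.powerset.filter (fun T => Dec x T ∧ ∀ j ∈ T, i < j ∧ x j ≤ v)).Nonempty :=
    ⟨∅, Finset.mem_filter.2 ⟨by simp, by simp [Dec], by simp⟩⟩
  obtain ⟨T, hT, he⟩ := Finset.exists_mem_eq_sup _ hne Finset.card
  simp only [Finset.mem_filter, Finset.mem_powerset] at hT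
  refine ⟨T, hT.1, hT.2.1, hT.2.2, ?_⟩
  rw [← he]; unfold hgt; congr!

lemma exists_Ht (N k : ℕ) (x : ℕ → ℤ) : ∃ h, Ht k h ∧ greeneC N x k ≤ Fv N x h := by
  classical
  obtain ⟨S, f, hf, hc⟩ := exists_fam N x k
  refine ⟨fun i v => hgt x S i v, ⟨?_, ?_⟩, ?_⟩
  · intro i j u v hij huv
    obtain ⟨T, hT, hd, hb, he⟩ := exists_hgt x S j u
    have := le_hgt (i := i) (v := v) hT hd (fun m hm => by have := hb m hm; omega)
    rw [he] at this
    beta_reduce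
    exact_mod_cast this
  · intro i v
    refine ⟨by positivity, ?_⟩
    obtain ⟨T, hT, hd, hb, he⟩ := exists_hgt x S i v
    have : T.card ≤ (Finset.range k).card := by
      refine Finset.card_le_card_of_injOn f (fun m hm => by simpa using hf.2.1 m (hT hm)) ?_
      intro p hp q hq hpq
      rcases lt_trichotomy p q with h | h | h
      · have h1 := hd p hp q hq h
        have h2 := hf.2.2 p (hT hp) q (hT hq) h hpq
        omega
      · exact h
      · have h1 := hd q hq p hp h
        have h2 := hf.2.2 q (hT hq) p (hT hp) h hpq.symm
        omega
    rw [Finset.card_range, he] at this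
    beta_reduce
    exact_mod_cast this
  · rw [← hc]
    have hF : Fv N x (fun i v => (hgt x S i v : ℤ)) = ((Finset.Icc 1 N).filter
        (fun i => (hgt x S i (x i - 1) : ℤ) < (hgt x S (i - 1) (x i) : ℤ))).card := by
      rw [Finset.card_filter]; rfl
    rw [hF]
    apply Finset.card_le_card
    intro i hi
    have hr := hf.1 i hi
    refine Finset.mem_filter.2 ⟨Finset.mem_Icc.2 hr, ?_⟩
    obtain ⟨T, hT, hd, hb, he⟩ := exists_hgt x S i (x i - 1)
    have hn : i ∉ T := fun h => by have := hb i h; omega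
    have := le_hgt (x := x) (S := S) (T := insert i T) (i := i - 1) (v := x i)
      (Finset.insert_subset hi hT) ?_ ?_
    · rw [Finset.card_insert_of_notMem hn, he] at this
      exact_mod_cast this
    · intro p hp q hq hpq
      rcases Finset.mem_insert.1 hp with h1 | h1 <;> rcases Finset.mem_insert.1 hq with h2 | h2
      · omega
      · have := hb q h2; subst h1; omega
      · have := hb p h1; omega
      · exact hd p h1 q h2 hpq
    · intro p hp
      rcases Finset.mem_insert.1 hp with rfl | hp
      · omega
      · have := hb p hp; omega

end Hollow

namespace Hollow

/-- The central configuration: `y` has central entries `-a, a` and `y'` has `a, -a`. -/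
structure Cen (n : ℕ) (a : ℤ) (y y' : ℕ → ℤ) : Prop where
  hn : 1 ≤ n
  ha : 1 ≤ a
  y1 : y n = -a
  y2 : y (n + 1) = a
  z1 : y' n = a
  z2 : y' (n + 1) = -a
  eq : ∀ i, 1 ≤ i → i ≤ 2 * n → i ≠ n → i ≠ n + 1 → y' i = y i
  sym : ∀ i, 1 ≤ i → i ≤ 2 * n → y (2 * n + 1 - i) = - y i

def rest (n : ℕ) : Finset ℕ := (Finset.Icc 1 (2 * n)).filter (fun i => i ≠ n ∧ i ≠ n + 1)

def Fy (n : ℕ) (a : ℤ) (y : ℕ → ℤ) (h : ℕ → ℤ → ℤ) : ℕ :=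
  ∑ i ∈ rest n, cnt y h i + ind (h (n + 1) (a - 1)) (h (n - 1) a)
    + ind (h (n + 1) (-a - 1)) (h (n - 1) (-a))

def Pat (n : ℕ) (a : ℤ) (h : ℕ → ℤ → ℤ) : Prop :=
  h (n - 1) a = h (n - 1) (-a) ∧ h (n - 1) a = h (n + 1) (a - 1) + 1 ∧
    h (n + 1) (-a - 1) = h (n + 1) (a - 1)

lemma sum_split {n : ℕ} (hn : 1 ≤ n) (g : ℕ → ℕ) :
    ∑ i ∈ Finset.Icc 1 (2 * n), g i = ∑ i ∈ rest n, g i + g n + g (n + 1) := by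
  have : Finset.Icc 1 (2 * n) = insert n (insert (n + 1) (rest n)) := by
    ext i
    simp only [rest, Finset.mem_insert, Finset.mem_filter, Finset.mem_Icc]
    omega
  rw [this, Finset.sum_insert, Finset.sum_insert]
  · ring
  · simp [rest]
  · simp [rest]

lemma Fv_split {n : ℕ} (hn : 1 ≤ n) (x : ℕ → ℤ) (h : ℕ → ℤ → ℤ) :
    Fv (2 * n) x h = ∑ i ∈ rest n, cnt x h i + cnt x h n + cnt x h (n + 1) :=
  sum_split hn _

lemma ind_mono {b a b' a' : ℤ} (h1 : b' ≤ b) (h2 : a ≤ a') : ind b a ≤ ind b' a' := by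
  unfold ind; split_ifs <;> omega

lemma rest_sum_eq {n : ℕ} {a : ℤ} {y y' : ℕ → ℤ} (C : Cen n a y y') (h : ℕ → ℤ → ℤ) :
    ∑ i ∈ rest n, cnt y' h i = ∑ i ∈ rest n, cnt y h i := by
  refine Finset.sum_congr rfl fun i hi => ?_
  simp only [rest, Finset.mem_filter, Finset.mem_Icc] at hi
  unfold cnt
  rw [C.eq i hi.1.1 hi.1.2 hi.2.1 hi.2.2]

def Mono (h : ℕ → ℤ → ℤ) : Prop := ∀ i j u v, i ≤ j → u ≤ v → h j u ≤ h i v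

lemma Fv_y_le {n : ℕ} {a : ℤ} {y y' : ℕ → ℤ} (C : Cen n a y y') {h : ℕ → ℤ → ℤ} (hh : Mono h) :
    Fv (2 * n) y h ≤ Fy n a y h := by
  rw [Fv_split C.hn]
  unfold Fy
  have h1 : cnt y h n ≤ ind (h (n + 1) (-a - 1)) (h (n - 1) (-a)) := by
    unfold cnt; rw [C.y1]
    exact ind_mono (hh _ _ _ _ (by omega) le_rfl) le_rfl
  have h2 : cnt y h (n + 1) ≤ ind (h (n + 1) (a - 1)) (h (n - 1) a) := by
    unfold cnt; rw [C.y2]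
    exact ind_mono le_rfl (hh _ _ _ _ (by omega) le_rfl)
  omega

lemma Fv_y'_le {n : ℕ} {a : ℤ} {y y' : ℕ → ℤ} (C : Cen n a y y') {h : ℕ → ℤ → ℤ} (hh : Mono h) :
    Fv (2 * n) y' h ≤ Fy n a y h := by
  rw [Fv_split C.hn, rest_sum_eq C]
  unfold Fy
  have h1 : cnt y' h n ≤ ind (h (n + 1) (a - 1)) (h (n - 1) a) := by
    unfold cnt; rw [C.z1]
    exact ind_mono (hh _ _ _ _ (by omega) le_rfl) le_rfl
  have h2 : cnt y' h (n + 1) ≤ ind (h (n + 1) (-a - 1)) (h (n - 1) (-a)) := by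
    unfold cnt; rw [C.z2]
    exact ind_mono le_rfl (hh _ _ _ _ (by omega) le_rfl)
  omega

lemma Fv_y'_lt {n : ℕ} {a : ℤ} {y y' : ℕ → ℤ} (C : Cen n a y y') {h : ℕ → ℤ → ℤ} (hh : Mono h)
    (hp : Pat n a h) : Fv (2 * n) y' h + 1 ≤ Fy n a y h := by
  rw [Fv_split C.hn, rest_sum_eq C]
  obtain ⟨p1, p2, p3⟩ := hp
  have ha := C.ha
  have h0 := hh n n (-a) (a - 1) le_rfl (by omega)
  have : cnt y' h n + cnt y' h (n + 1) + 1 ≤ ind (h (n + 1) (a - 1)) (h (n - 1) a)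
      + ind (h (n + 1) (-a - 1)) (h (n - 1) (-a)) := by
    unfold cnt; rw [C.z1, C.z2]
    simp only [Nat.add_sub_cancel]
    unfold ind
    split_ifs <;> omega
  unfold Fy
  omega

lemma Ht.update {n k : ℕ} (hn : 1 ≤ n) {h : ℕ → ℤ → ℤ} (hh : Ht k h) {col : ℤ → ℤ}
    (hm : ∀ u v, u ≤ v → col u ≤ col v) (h1 : ∀ v, h (n + 1) v ≤ col v)
    (h2 : ∀ v, col v ≤ h (n - 1) v) : Ht k (Function.update h n col) := by
  constructor
  · intro i j u v hij huv
    by_cases hi : i = n <;> by_cases hj : j = n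
    · subst hi; subst hj; simpa using hm u v huv
    · subst hi
      rw [Function.update_of_ne hj, Function.update_self]
      exact (hh.1 (i + 1) j u v (by omega) huv).trans (h1 v)
    · subst hj
      rw [Function.update_of_ne hi, Function.update_self]
      exact (h2 u).trans (hh.1 i (j - 1) u v (by omega) huv)
    · rw [Function.update_of_ne hj, Function.update_of_ne hi]
      exact hh.1 i j u v hij huv
  · intro i v
    by_cases hi : i = n
    · subst hi
      rw [Function.update_self]
      exact ⟨(hh.2 _ v).1.trans (h1 v), (h2 v).trans (hh.2 _ v).2⟩
    · rw [Function.update_of_ne hi]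
      exact hh.2 i v

lemma rest_update {n : ℕ} (y : ℕ → ℤ) (h : ℕ → ℤ → ℤ) (col : ℤ → ℤ) :
    ∑ i ∈ rest n, cnt y (Function.update h n col) i = ∑ i ∈ rest n, cnt y h i := by
  refine Finset.sum_congr rfl fun i hi => ?_
  simp only [rest, Finset.mem_filter, Finset.mem_Icc] at hi
  unfold cnt
  rw [Function.update_of_ne (by omega), Function.update_of_ne (by omega)]

lemma Fy_le {n k : ℕ} {a : ℤ} {y y' : ℕ → ℤ} (C : Cen n a y y') {h : ℕ → ℤ → ℤ} (hh : Ht k h) :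
    Fy n a y h ≤ greeneC (2 * n) y k := by
  have hn := C.hn
  have ha := C.ha
  have hU := hh.update C.hn (col := fun v => if 0 ≤ v then h (n - 1) v else h (n + 1) v) ?_ ?_ ?_
  · refine le_trans (le_of_eq ?_) (Fv_le hU)
    rw [Fv_split C.hn, rest_update]
    unfold Fy cnt
    rw [C.y1, C.y2]
    rw [Function.update_self, Function.update_of_ne (by omega), Function.update_of_ne (by omega),
      Nat.add_sub_cancel, Function.update_self]
    beta_reduce
    rw [if_neg (by omega), if_pos (by omega)]
    omega
  · intro u v huv
    beta_reduce
    split_ifs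
    · exact hh.1 _ _ _ _ le_rfl huv
    · omega
    · exact hh.1 _ _ _ _ (by omega) huv
    · exact hh.1 _ _ _ _ le_rfl huv
  · intro v
    beta_reduce
    split_ifs
    · exact hh.1 _ _ _ _ (by omega) le_rfl
    · exact le_rfl
  · intro v
    beta_reduce
    split_ifs
    · exact le_rfl
    · exact hh.1 _ _ _ _ (by omega) le_rfl

lemma Fy_le_col {n k : ℕ} {a : ℤ} {y y' : ℕ → ℤ} (C : Cen n a y y') {h : ℕ → ℤ → ℤ} (hh : Ht k h)
    (m : ℤ) : ∑ i ∈ rest n, cnt y h i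
      + ind (max (h (n + 1) (a - 1)) (min m (h (n - 1) (a - 1)))) (h (n - 1) a)
      + ind (h (n + 1) (-a - 1)) (max (h (n + 1) (-a)) (min m (h (n - 1) (-a))))
      ≤ greeneC (2 * n) y' k := by
  have hn := C.hn
  have hU := hh.update C.hn (col := fun v => max (h (n + 1) v) (min m (h (n - 1) v))) ?_ ?_ ?_
  · refine le_trans (le_of_eq ?_) (Fv_le hU)
    rw [Fv_split C.hn, rest_sum_eq C, rest_update]
    unfold cnt
    rw [C.z1, C.z2]
    rw [Function.update_self, Function.update_of_ne (by omega), Function.update_of_ne (by omega),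
      Nat.add_sub_cancel, Function.update_self]
  · intro u v huv
    have h1 := hh.1 (n + 1) (n + 1) u v le_rfl huv
    have h2 := hh.1 (n - 1) (n - 1) u v le_rfl huv
    beta_reduce
    omega
  · intro v
    exact le_max_left _ _
  · intro v
    have h1 := hh.1 (n - 1) (n + 1) v v (by omega) le_rfl
    beta_reduce
    omega

lemma Fy_le' {n k : ℕ} {a : ℤ} {y y' : ℕ → ℤ} (C : Cen n a y y') {h : ℕ → ℤ → ℤ} (hh : Ht k h) :
    Fy n a y h ≤ greeneC (2 * n) y' k + 1 ∧
      (¬ Pat n a h → Fy n a y h ≤ greeneC (2 * n) y' k) := by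
  have hn := C.hn
  have ha := C.ha
  have H := Fy_le_col C hh
  have e1 := hh.1 (n - 1) (n - 1) (-a) (a - 1) le_rfl (by omega)
  have e2 := hh.1 (n - 1) (n - 1) (a - 1) a le_rfl (by omega)
  have e3 := hh.1 (n + 1) (n + 1) (-a - 1) (-a) le_rfl (by omega)
  have e4 := hh.1 (n + 1) (n + 1) (-a) (a - 1) le_rfl (by omega)
  have e5 := hh.1 (n - 1) (n + 1) (a - 1) (a - 1) (by omega) le_rfl
  have e6 := hh.1 (n - 1) (n + 1) (-a) (-a) (by omega) le_rfl
  unfold Fy Pat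
  revert H
  generalize h (n - 1) a = α at *
  generalize h (n + 1) (a - 1) = β at *
  generalize h (n - 1) (-a) = γ at *
  generalize h (n + 1) (-a - 1) = δ at *
  generalize h (n - 1) (a - 1) = P at *
  generalize h (n + 1) (-a) = Q at *
  generalize ∑ i ∈ rest n, cnt y h i = R
  intro H
  unfold ind at *
  by_cases c1 : γ ≤ β
  · have := H β
    split_ifs at * <;> omega
  · by_cases c2 : α > γ
    · have := H γ
      split_ifs at * <;> omega
    · by_cases c3 : δ < β
      · have := H β
        split_ifs at * <;> omega
      · have := H (β + 1)
        split_ifs at * <;> omega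

lemma ind_submod {b a b' a' : ℤ} (h1 : b ≤ a) (h2 : b' ≤ a') :
    ind b a + ind b' a' ≤ ind (min b b') (min a a') + ind (max b b') (max a a') := by
  unfold ind; split_ifs <;> omega

lemma Fy_submod {n : ℕ} {a : ℤ} {y : ℕ → ℤ} (ha : 1 ≤ a) {f g : ℕ → ℤ → ℤ}
    (hf : Mono f) (hg : Mono g) :
    Fy n a y f + Fy n a y g ≤ Fy n a y (fun i v => min (f i v) (g i v))
      + Fy n a y (fun i v => max (f i v) (g i v)) := by
  have h1 : ∑ i ∈ rest n, cnt y f i + ∑ i ∈ rest n, cnt y g i ≤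
      ∑ i ∈ rest n, cnt y (fun i v => min (f i v) (g i v)) i +
      ∑ i ∈ rest n, cnt y (fun i v => max (f i v) (g i v)) i := by
    rw [← Finset.sum_add_distrib, ← Finset.sum_add_distrib]
    refine Finset.sum_le_sum fun i _ => ?_
    exact ind_submod (hf _ _ _ _ (by omega) (by omega)) (hg _ _ _ _ (by omega) (by omega))
  have h2 := ind_submod (hf (n - 1) (n + 1) (a - 1) a (by omega) (by omega))
    (hg (n - 1) (n + 1) (a - 1) a (by omega) (by omega))
  have h3 := ind_submod (hf (n - 1) (n + 1) (-a - 1) (-a) (by omega) (by omega))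
    (hg (n - 1) (n + 1) (-a - 1) (-a) (by omega) (by omega))
  unfold Fy
  beta_reduce
  omega

lemma ind_add (b a c : ℤ) : ind (b + c) (a + c) = ind b a := by
  unfold ind; simp

lemma Fy_shift (n : ℕ) (a : ℤ) (y : ℕ → ℤ) (f : ℕ → ℤ → ℤ) (c : ℤ) :
    Fy n a y (fun i v => f i v + c) = Fy n a y f := by
  unfold Fy cnt
  simp only [ind_add]

def sg (n k : ℕ) (f : ℕ → ℤ → ℤ) : ℕ → ℤ → ℤ := fun i v => k - f (2 * n - i) (-v - 1)

lemma Ht_sg {n k : ℕ} {f : ℕ → ℤ → ℤ} (hf : Ht k f) : Ht k (sg n k f) := by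
  constructor
  · intro i j u v hij huv
    have := hf.1 (2 * n - j) (2 * n - i) (-v - 1) (-u - 1) (by omega) (by omega)
    unfold sg; omega
  · intro i v
    have := hf.2 (2 * n - i) (-v - 1)
    unfold sg; omega

lemma ind_sub (b a c : ℤ) : ind (c - b) (c - a) = ind a b := by
  unfold ind; simp

lemma Fy_sg {n k : ℕ} {a : ℤ} {y y' : ℕ → ℤ} (C : Cen n a y y') (f : ℕ → ℤ → ℤ) :
    Fy n a y (sg n k f) = Fy n a y f := by
  have hn := C.hn
  have h1 : ∑ i ∈ rest n, cnt y (sg n k f) i = ∑ i ∈ rest n, cnt y f i := by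
    refine Finset.sum_nbij' (fun i => 2 * n + 1 - i) (fun i => 2 * n + 1 - i) ?_ ?_ ?_ ?_ ?_
    · intro i hi
      simp only [rest, Finset.mem_filter, Finset.mem_Icc] at hi ⊢; omega
    · intro i hi
      simp only [rest, Finset.mem_filter, Finset.mem_Icc] at hi ⊢; omega
    · intro i hi
      simp only [rest, Finset.mem_filter, Finset.mem_Icc] at hi ⊢; omega
    · intro i hi
      simp only [rest, Finset.mem_filter, Finset.mem_Icc] at hi ⊢; omega
    · intro i hi
      simp only [rest, Finset.mem_filter, Finset.mem_Icc] at hi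
      unfold cnt sg
      rw [ind_sub, C.sym i (by omega) (by omega)]
      congr 2 <;> omega
  unfold Fy
  rw [h1]
  unfold sg
  rw [ind_sub, ind_sub]
  have e1 : 2 * n - (n - 1) = n + 1 := by omega
  have e2 : 2 * n - (n + 1) = n - 1 := by omega
  have e3 : - (a - 1) - 1 = -a := by ring
  have e4 : - (-a - 1) - 1 = a := by ring
  have e5 : - -a - 1 = a - 1 := by ring
  rw [e1, e2, e3, e4, e5]
  omega

section main
variable {n k : ℕ} {a : ℤ} {y y' : ℕ → ℤ}

lemma c_le (C : Cen n a y y') (k : ℕ) : greeneC (2 * n) y' k ≤ greeneC (2 * n) y k := by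
  obtain ⟨h, hh, hc⟩ := exists_Ht (2 * n) k y'
  exact hc.trans ((Fv_y'_le C hh.1).trans (Fy_le C hh))

lemma c_le_succ (C : Cen n a y y') (k : ℕ) :
    greeneC (2 * n) y k ≤ greeneC (2 * n) y' k + 1 := by
  obtain ⟨h, hh, hc⟩ := exists_Ht (2 * n) k y
  exact hc.trans ((Fv_y_le C hh.1).trans (Fy_le' C hh).1)

lemma opt_pat (C : Cen n a y y') (hlt : greeneC (2 * n) y' k < greeneC (2 * n) y k)
    {f : ℕ → ℤ → ℤ} (hf : Ht k f) (ho : greeneC (2 * n) y k ≤ Fy n a y f) : Pat n a f := by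
  by_contra hp
  have := (Fy_le' C hf).2 hp
  omega

lemma exists_g (C : Cen n a y y') {k' : ℕ}
    (he : greeneC (2 * n) y k' ≤ greeneC (2 * n) y' k') :
    ∃ g, Ht k' g ∧ greeneC (2 * n) y k' ≤ Fy n a y g ∧ ¬ Pat n a g := by
  obtain ⟨g, hg, hc⟩ := exists_Ht (2 * n) k' y'
  have h1 := Fv_y'_le C hg.1
  refine ⟨g, hg, by omega, fun hp => ?_⟩
  have h2 := Fv_y'_lt C hg.1 hp
  have h3 := Fy_le C hg
  omega

lemma step_up (C : Cen n a y y') (hlt : greeneC (2 * n) y' k < greeneC (2 * n) y k)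
    {f g : ℕ → ℤ → ℤ} (hf : Ht k f) (ho : greeneC (2 * n) y k ≤ Fy n a y f)
    (hg : Ht (k + 1) g) (hgo : greeneC (2 * n) y (k + 1) ≤ Fy n a y g) :
    Pat n a f ∧ Pat n a (fun i v => min (f i v) (g i v)) ∧
      Pat n a (fun i v => max (f i v) (g i v - 1)) := by
  refine ⟨opt_pat C hlt hf ho, opt_pat C hlt ?_ ?_, opt_pat C hlt ?_ ?_⟩
  · constructor
    · intro i j u v h1 h2
      have := hf.1 i j u v h1 h2
      have := hg.1 i j u v h1 h2
      simp only; omega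
    · intro i v
      have := hf.2 i v
      have := hg.2 i v
      simp only; omega
  · have h1 := Fy_submod (n := n) (y := y) C.ha hf.1 hg.1
    have h2 : Ht (k + 1) (fun i v => max (f i v) (g i v)) := by
      constructor
      · intro i j u v h1 h2
        have := hf.1 i j u v h1 h2
        have := hg.1 i j u v h1 h2
        simp only; omega
      · intro i v
        have := hf.2 i v
        have := hg.2 i v
        simp only; omega
    have h3 := Fy_le C h2
    omega
  · constructor
    · intro i j u v h1 h2
      have := hf.1 i j u v h1 h2
      have := hg.1 i j u v h1 h2
      simp only; omega
    · intro i v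
      have := hf.2 i v
      have := hg.2 i v
      simp only; omega
  · have hg1 : Mono (fun i v => g i v + -1) := by
      intro i j u v h1 h2
      have := hg.1 i j u v h1 h2
      simp only; omega
    have h1 := Fy_submod (n := n) (y := y) C.ha hf.1 hg1
    have h2 : Ht (k + 1) (fun i v => min (f i v) (g i v + -1) + 1) := by
      constructor
      · intro i j u v h1 h2
        have := hf.1 i j u v h1 h2
        have := hg.1 i j u v h1 h2
        simp only; omega
      · intro i v
        have := hf.2 i v
        have := hg.2 i v
        simp only; omega
    have h3 := Fy_le C h2
    rw [Fy_shift] at h1 h3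
    have h4 : Fy n a y (fun i v => max (f i v) (g i v - 1)) =
      Fy n a y (fun i v => max (f i v) (g i v + -1)) := rfl
    omega

lemma step_down (C : Cen n a y y') (hlt : greeneC (2 * n) y' (k + 1) < greeneC (2 * n) y (k + 1))
    {f g : ℕ → ℤ → ℤ} (hf : Ht (k + 1) f) (ho : greeneC (2 * n) y (k + 1) ≤ Fy n a y f)
    (hg : Ht k g) (hgo : greeneC (2 * n) y k ≤ Fy n a y g) :
    Pat n a f ∧ Pat n a (fun i v => max (f i v) (g i v)) ∧
      Pat n a (fun i v => min (f i v) (g i v + 1)) := by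
  refine ⟨opt_pat C hlt hf ho, opt_pat C hlt ?_ ?_, opt_pat C hlt ?_ ?_⟩
  · constructor
    · intro i j u v h1 h2
      have := hf.1 i j u v h1 h2
      have := hg.1 i j u v h1 h2
      simp only; omega
    · intro i v
      have := hf.2 i v
      have := hg.2 i v
      simp only; omega
  · have h1 := Fy_submod (n := n) (y := y) C.ha hf.1 hg.1
    have h2 : Ht k (fun i v => min (f i v) (g i v)) := by
      constructor
      · intro i j u v h1 h2
        have := hf.1 i j u v h1 h2
        have := hg.1 i j u v h1 h2
        simp only; omega
      · intro i v
        have := hf.2 i v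
        have := hg.2 i v
        simp only; omega
    have h3 := Fy_le C h2
    omega
  · constructor
    · intro i j u v h1 h2
      have := hf.1 i j u v h1 h2
      have := hg.1 i j u v h1 h2
      simp only; omega
    · intro i v
      have := hf.2 i v
      have := hg.2 i v
      simp only; omega
  · have hg1 : Mono (fun i v => g i v + 1) := by
      intro i j u v h1 h2
      have := hg.1 i j u v h1 h2
      simp only; omega
    have h1 := Fy_submod (n := n) (y := y) C.ha hf.1 hg1
    have h2 : Ht k (fun i v => max (f i v) (g i v + 1) + -1) := by
      constructor
      · intro i j u v h1 h2
        have := hf.1 i j u v h1 h2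
        have := hg.1 i j u v h1 h2
        simp only; omega
      · intro i v
        have := hf.2 i v
        have := hg.2 i v
        simp only; omega
    have h3 := Fy_le C h2
    rw [Fy_shift] at h1 h3
    omega

lemma sg_vals (C : Cen n a y y') (f : ℕ → ℤ → ℤ) :
    sg n k f (n - 1) a = k - f (n + 1) (-a - 1) ∧ sg n k f (n + 1) (a - 1) = k - f (n - 1) (-a) ∧
    sg n k f (n - 1) (-a) = k - f (n + 1) (a - 1) ∧
    sg n k f (n + 1) (-a - 1) = k - f (n - 1) a := by
  have hn := C.hn
  have e1 : 2 * n - (n - 1) = n + 1 := by omega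
  have e2 : 2 * n - (n + 1) = n - 1 := by omega
  have e3 : - (a - 1) - 1 = -a := by ring
  have e4 : - (-a - 1) - 1 = a := by ring
  have e5 : - -a - 1 = a - 1 := by ring
  simp only [sg, e1, e2, e3, e4, e5, and_self]

lemma pat_up {A B G D r : ℤ} (hn : ¬ (A = G ∧ A = B + 1 ∧ D = B))
    (h1 : min r A = min r G ∧ min r A = min (r - 1) B + 1 ∧ min (r - 1) D = min (r - 1) B)
    (h2 : max r (A - 1) = max r (G - 1) ∧ max r (A - 1) = max (r - 1) (B - 1) + 1 ∧
      max (r - 1) (D - 1) = max (r - 1) (B - 1)) :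
    (r - 1 ≤ B ∧ B ≤ r) ∧ (r - 1 ≤ D ∧ D ≤ r) ∧ (r ≤ A ∧ A ≤ r + 1) ∧ (r ≤ G ∧ G ≤ r + 1) := by
  obtain ⟨a1, a2, a3⟩ := h1
  obtain ⟨b1, b2, b3⟩ := h2
  have hB : r - 1 ≤ B := by
    by_contra hB
    have : min (r - 1) B = B := by omega
    have : A = B + 1 := by omega
    have : G = A := by omega
    have : D = B := by omega
    omega
  have hA : A ≤ r + 1 := by
    by_contra hA
    have : max r (A - 1) = A - 1 := by omega
    have : B = A - 1 := by omega
    have : G = A := by omega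
    have : D = B := by omega
    omega
  refine ⟨⟨hB, ?_⟩, ⟨?_, ?_⟩, ⟨?_, hA⟩, ⟨?_, ?_⟩⟩ <;> omega

lemma pat_down {A B G D r : ℤ} (hn : ¬ (A = G ∧ A = B + 1 ∧ D = B))
    (h1 : max r A = max r G ∧ max r A = max (r - 1) B + 1 ∧ max (r - 1) D = max (r - 1) B)
    (h2 : min r (A + 1) = min r (G + 1) ∧ min r (A + 1) = min (r - 1) (B + 1) + 1 ∧
      min (r - 1) (D + 1) = min (r - 1) (B + 1)) :
    (r - 2 ≤ B ∧ B ≤ r - 1) ∧ (r - 2 ≤ D ∧ D ≤ r - 1) ∧ (r - 1 ≤ A ∧ A ≤ r) ∧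
      (r - 1 ≤ G ∧ G ≤ r) := by
  have := @pat_up (A + 1) (B + 1) (G + 1) (D + 1) r (by omega) h2
    (by simpa only [add_sub_cancel_right] using h1)
  omega

lemma diff_up (C : Cen n a y y') (hk : Even k)
    (hlt : greeneC (2 * n) y' k < greeneC (2 * n) y k) :
    greeneC (2 * n) y' (k + 1) < greeneC (2 * n) y (k + 1) := by
  by_contra hcon
  obtain ⟨g, hg, hgo, hgp⟩ := exists_g C (k' := k + 1) (by omega)
  obtain ⟨f, hf, hfo⟩ := exists_Ht (2 * n) k y
  have hfo' := hfo.trans (Fv_y_le C hf.1)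
  obtain ⟨p1, p2, p3⟩ := step_up C hlt hf hfo' hg hgo
  obtain ⟨q1, q2, q3⟩ := step_up C hlt (Ht_sg (n := n) hf) (by rw [Fy_sg C]; exact hfo') hg hgo
  obtain ⟨s1, s2, s3, s4⟩ := sg_vals (k := k) C f
  obtain ⟨t, ht⟩ := hk
  unfold Pat at *
  simp only [s1, s2, s3, s4] at p2 p3 q2 q3
  obtain ⟨r1, r2, r3⟩ := p1
  generalize f (n - 1) a = r at *
  rw [r3, ← r1, show f (n + 1) (a - 1) = r - 1 by omega] at p2 p3 q2 q3
  rw [show ((k : ℕ) : ℤ) - r = (k : ℕ) - (r - 1) - 1 by ring] at q2 q3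
  have u1 := pat_up hgp p2 p3
  have u2 := pat_up hgp q2 q3
  have : r ≠ ((k : ℕ) : ℤ) - (r - 1) := by omega
  clear p2 p3 q2 q3
  omega

lemma diff_down (C : Cen n a y y') (hk : Even (k + 1))
    (hlt : greeneC (2 * n) y' (k + 1) < greeneC (2 * n) y (k + 1)) :
    greeneC (2 * n) y' k < greeneC (2 * n) y k := by
  by_contra hcon
  obtain ⟨g, hg, hgo, hgp⟩ := exists_g C (k' := k) (by omega)
  obtain ⟨f, hf, hfo⟩ := exists_Ht (2 * n) (k + 1) y
  have hfo' := hfo.trans (Fv_y_le C hf.1)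
  obtain ⟨p1, p2, p3⟩ := step_down C hlt hf hfo' hg hgo
  obtain ⟨q1, q2, q3⟩ := step_down C hlt (Ht_sg (n := n) hf) (by rw [Fy_sg C]; exact hfo') hg hgo
  obtain ⟨s1, s2, s3, s4⟩ := sg_vals (k := k + 1) C f
  obtain ⟨t, ht⟩ := hk
  unfold Pat at *
  simp only [s1, s2, s3, s4] at p2 p3 q2 q3
  obtain ⟨r1, r2, r3⟩ := p1
  generalize f (n - 1) a = r at *
  rw [r3, ← r1, show f (n + 1) (a - 1) = r - 1 by omega] at p2 p3 q2 q3
  rw [show ((k + 1 : ℕ) : ℤ) - r = (k + 1 : ℕ) - (r - 1) - 1 by ring] at q2 q3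
  have u1 := pat_down hgp p2 p3
  have u2 := pat_down hgp q2 q3
  have : r ≠ ((k + 1 : ℕ) : ℤ) - (r - 1) := by omega
  clear p2 p3 q2 q3
  omega

end main

end Hollow

namespace Hollow

def RR (r : ℤ → ℤ → Prop) (p q : ℤ × Option ℕ) : Prop :=
  ∀ c, p.2 = some c → q.2 = some c → r p.1 q.1

def cntS (L : List (ℤ × Option ℕ)) : ℕ := L.countP (fun p => p.2.isSome)

def Fam (r : ℤ → ℤ → Prop) (k : ℕ) (L : List (ℤ × Option ℕ)) : Prop :=
  L.Pairwise (RR r) ∧ ∀ p ∈ L, ∀ c, p.2 = some c → c < k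

def HasFam (r : ℤ → ℤ → Prop) (k : ℕ) (l : List ℤ) (m : ℕ) : Prop :=
  ∃ L, L.map Prod.fst = l ∧ Fam r k L ∧ m ≤ cntS L

def sw (c c' : ℕ) (q : ℤ × Option ℕ) : ℤ × Option ℕ := (q.1, q.2.map (Equiv.swap c c'))

lemma sw_spec {c c' d : ℕ} {q : ℤ × Option ℕ} (h : (sw c c' q).2 = some d) :
    (q.2 = some c ∧ d = c') ∨ (q.2 = some c' ∧ d = c) ∨ (q.2 = some d ∧ d ≠ c ∧ d ≠ c') := by
  simp only [sw, Option.map_eq_some_iff] at h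
  obtain ⟨e, he, hd⟩ := h
  by_cases h1 : e = c
  · subst h1; left; simp at hd; exact ⟨he, hd.symm⟩
  · by_cases h2 : e = c'
    · subst h2; right; left; simp at hd; exact ⟨he, hd.symm⟩
    · rw [Equiv.swap_apply_of_ne_of_ne h1 h2] at hd
      subst hd; right; right; exact ⟨he, h1, h2⟩

lemma cntS_append (L M : List (ℤ × Option ℕ)) : cntS (L ++ M) = cntS L + cntS M := by
  simp [cntS]

lemma cntS_sw (c c' : ℕ) (V : List (ℤ × Option ℕ)) : cntS (V.map (sw c c')) = cntS V := by
  unfold cntS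
  rw [List.countP_map]
  congr 1
  funext p
  simp [sw]

lemma map_fst_sw (c c' : ℕ) (V : List (ℤ × Option ℕ)) :
    (V.map (sw c c')).map Prod.fst = V.map Prod.fst := by
  simp [sw]

lemma pw_sw {r : ℤ → ℤ → Prop} (c c' : ℕ) {V : List (ℤ × Option ℕ)} (h : V.Pairwise (RR r)) :
    (V.map (sw c c')).Pairwise (RR r) := by
  rw [List.pairwise_map]
  refine h.imp ?_
  intro p q hpq d hp hq
  rcases sw_spec hp with h1 | h1 | h1 <;> rcases sw_spec hq with h2 | h2 | h2 <;>
    first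
    | exact hpq _ h1.1 h2.1
    | (exfalso; grind)
    | (exact hpq _ h1.1 (by grind))

/-- pairwise decomposition for a block of three -/
lemma pw3 {r : ℤ → ℤ → Prop} {U V : List (ℤ × Option ℕ)} {a b c : ℤ × Option ℕ} :
    (U ++ [a, b, c] ++ V).Pairwise (RR r) ↔
      U.Pairwise (RR r) ∧ V.Pairwise (RR r) ∧ RR r a b ∧ RR r a c ∧ RR r b c ∧
      (∀ p ∈ U, RR r p a ∧ RR r p b ∧ RR r p c) ∧ (∀ q ∈ V, RR r a q ∧ RR r b q ∧ RR r c q) ∧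
      (∀ p ∈ U, ∀ q ∈ V, RR r p q) := by
  simp only [List.pairwise_append, List.pairwise_cons, List.mem_append, List.mem_cons,
    List.not_mem_nil, or_false]
  constructor
  · rintro ⟨⟨h1, ⟨h2, h3, -⟩, h4⟩, h5, h6⟩
    refine ⟨h1, h5, h2 _ (by simp), h2 _ (by simp), h3 _ (by simp), ?_, ?_, ?_⟩
    · intro p hp; exact ⟨h4 p hp _ (by simp), h4 p hp _ (by simp), h4 p hp _ (by simp)⟩
    · intro q hq; exact ⟨h6 _ (by simp) q hq, h6 _ (by simp) q hq, h6 _ (by simp) q hq⟩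
    · intro p hp q hq; exact h6 _ (by simp [hp]) q hq
  · rintro ⟨h1, h2, h3, h4, h5, h6, h7, h8⟩
    refine ⟨⟨h1, ⟨?_, ?_, by simp⟩, ?_⟩, h2, ?_⟩
    · rintro q (rfl | rfl) <;> assumption
    · rintro q rfl; assumption
    · rintro p hp q (rfl | rfl | rfl)
      · exact (h6 p hp).1
      · exact (h6 p hp).2.1
      · exact (h6 p hp).2.2
    · rintro p (hp | rfl | rfl | rfl) q hq
      · exact h8 p hp q hq
      · exact (h7 q hq).1
      · exact (h7 q hq).2.1
      · exact (h7 q hq).2.2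

lemma split3 {u v : List ℤ} {a b c : ℤ} {L : List (ℤ × Option ℕ)}
    (h : L.map Prod.fst = u ++ [a, b, c] ++ v) :
    ∃ U V ca cb cc, L = U ++ [(a, ca), (b, cb), (c, cc)] ++ V ∧ U.map Prod.fst = u ∧
      V.map Prod.fst = v := by
  obtain ⟨L1, V, rfl, h1, h2⟩ := List.map_eq_append_iff.1 h
  obtain ⟨U, M, rfl, h3, h4⟩ := List.map_eq_append_iff.1 h1
  match M, h4 with
  | [(a', ca), (b', cb), (c', cc)], h4 =>
    simp at h4
    obtain ⟨rfl, rfl, rfl⟩ := h4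
    exact ⟨U, V, ca, cb, cc, rfl, h3, h2⟩

lemma fam3_intro {r : ℤ → ℤ → Prop} {k m : ℕ} {u v : List ℤ} {U V : List (ℤ × Option ℕ)}
    {a b c : ℤ} {ca cb cc : Option ℕ} (hU : U.map Prod.fst = u) (hV : V.map Prod.fst = v)
    (hF : Fam r k (U ++ [(a, ca), (b, cb), (c, cc)] ++ V))
    (hm : m ≤ cntS (U ++ [(a, ca), (b, cb), (c, cc)] ++ V)) :
    HasFam r k (u ++ [a, b, c] ++ v) m :=
  ⟨_, by simp [hU, hV], hF, hm⟩

/-- color bound for a block -/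
lemma cb3 {k : ℕ} {U V : List (ℤ × Option ℕ)} {a b c : ℤ × Option ℕ} :
    (∀ p ∈ U ++ [a, b, c] ++ V, ∀ d, p.2 = some d → d < k) ↔
    (∀ p ∈ U, ∀ d, p.2 = some d → d < k) ∧ (∀ p ∈ V, ∀ d, p.2 = some d → d < k) ∧
    (∀ d, a.2 = some d → d < k) ∧ (∀ d, b.2 = some d → d < k) ∧ (∀ d, c.2 = some d → d < k) := by
  simp only [List.mem_append, List.mem_cons, List.not_mem_nil, or_false]
  constructor
  · intro h
    exact ⟨fun p hp => h p (by simp [hp]), fun p hp => h p (by simp [hp]), h _ (by simp),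
      h _ (by simp), h _ (by simp)⟩
  · rintro ⟨h1, h2, h3, h4, h5⟩ p ((hp | rfl | rfl | rfl) | hp)
    · exact h1 p hp
    · exact h3
    · exact h4
    · exact h5
    · exact h2 p hp

lemma cb_sw {k c c' : ℕ} {V : List (ℤ × Option ℕ)} (hc : c < k) (hc' : c' < k)
    (h : ∀ p ∈ V, ∀ d, p.2 = some d → d < k) :
    ∀ p ∈ V.map (sw c c'), ∀ d, p.2 = some d → d < k := by
  intro p hp d hd
  obtain ⟨q, hq, rfl⟩ := List.mem_map.1 hp
  rcases sw_spec hd with h1 | h1 | h1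
  · omega
  · omega
  · exact h q hq d h1.1

lemma moveA {r : ℤ → ℤ → Prop} (hi : ∀ a, ¬ r a a) (ht : ∀ a b c, r a b → r b c → r a c) {x y z : ℤ}
    (hxy : r x y) (hyz : r y z) {u v : List ℤ} {k m : ℕ}
    (h : HasFam r k (u ++ [y, x, z] ++ v) m) : HasFam r k (u ++ [y, z, x] ++ v) m := by
  obtain ⟨L, hL, ⟨hP, hC⟩, hm⟩ := h
  obtain ⟨U, V, cy, cx, cz, rfl, hU, hV⟩ := split3 hL
  rw [pw3] at hP
  rw [cb3] at hC
  obtain ⟨P1, P2, P3, P4, P5, P6, P7, P8⟩ := hP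
  obtain ⟨C1, C2, C3, C4, C5⟩ := hC
  rw [cntS_append, cntS_append] at hm
  by_cases hcc : ∃ c, cx = some c ∧ cz = some c
  · obtain ⟨c, rfl, rfl⟩ := hcc
    have hxz := ht _ _ _ hxy hyz
    cases cy with
    | none =>
      refine fam3_intro (ca := some c) (cb := some c) (cc := none) hU hV ⟨pw3.2 ?_, cb3.2 ?_⟩ ?_
      · refine ⟨P1, P2, ?_, ?_, ?_, ?_, ?_, P8⟩
        · intro d _ _; exact hyz
        · intro d _ h; simp at h
        · intro d _ h; simp at h
        · intro p hp
          refine ⟨fun d h1 h2 => ?_, (P6 p hp).2.2, fun d _ h => by simp at h⟩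
          exact ht _ _ _ ((P6 p hp).2.1 d h1 h2) hxy
        · intro q hq
          refine ⟨fun d h1 h2 => ?_, (P7 q hq).2.2, fun d h => by simp at h⟩
          exact ht _ _ _ hyz ((P7 q hq).2.2 d h1 h2)
      · exact ⟨C1, C2, C4, C4, by simp⟩
      · rw [cntS_append, cntS_append]
        simp [cntS] at hm ⊢; omega
    | some c' =>
      have hne : c ≠ c' := by
        rintro rfl
        exact hi _ (ht _ _ _ hxy (P3 c rfl rfl))
      refine fam3_intro (V := V.map (sw c c')) (ca := some c') (cb := some c') (cc := some c) hU
        (by rw [map_fst_sw, hV]) ⟨pw3.2 ?_, cb3.2 ?_⟩ ?_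
      · refine ⟨P1, pw_sw c c' P2, ?_, ?_, ?_, ?_, ?_, ?_⟩
        · intro d _ _; exact hyz
        · intro d h1 h2; simp at h1 h2; omega
        · intro d h1 h2; simp at h1 h2; omega
        · intro p hp
          refine ⟨(P6 p hp).1, fun d h1 h2 => ?_, (P6 p hp).2.1⟩
          exact ht _ _ _ ((P6 p hp).1 d h1 h2) hyz
        · intro q' hq'
          obtain ⟨q, hq, rfl⟩ := List.mem_map.1 hq'
          refine ⟨fun d h1 h2 => ?_, fun d h1 h2 => ?_, fun d h1 h2 => ?_⟩ <;>
            simp only [Option.some.injEq] at h1 <;> rcases sw_spec h2 with h3 | h3 | h3 <;>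
            first
            | (exfalso; omega)
            | exact ht _ _ _ hyz ((P7 q hq).2.2 c rfl h3.1)
            | exact (P7 q hq).2.2 c rfl h3.1
            | exact ht _ _ _ hxy ((P7 q hq).1 c' rfl h3.1)
        · intro p hp q' hq' d h1 h2
          obtain ⟨q, hq, rfl⟩ := List.mem_map.1 hq'
          rcases sw_spec h2 with ⟨h3, rfl⟩ | ⟨h3, rfl⟩ | h3
          · exact ht _ _ _ ((P6 p hp).1 _ h1 rfl) (ht _ _ _ hyz ((P7 q hq).2.2 _ rfl h3))
          · exact ht _ _ _ ((P6 p hp).2.1 _ h1 rfl) (ht _ _ _ hxy ((P7 q hq).1 _ rfl h3))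
          · exact P8 p hp q hq d h1 h3.1
      · exact ⟨C1, cb_sw (C4 c rfl) (C3 c' rfl) C2, C3, C3, C4⟩
      · rw [cntS_append, cntS_append, cntS_sw]
        simp [cntS] at hm ⊢; omega
  · refine fam3_intro (ca := cy) (cb := cz) (cc := cx) hU hV ⟨pw3.2 ?_, cb3.2 ?_⟩ ?_
    · refine ⟨P1, P2, P4, P3, ?_, ?_, ?_, P8⟩
      · intro d h1 h2; exact absurd ⟨d, h2, h1⟩ hcc
      · intro p hp; exact ⟨(P6 p hp).1, (P6 p hp).2.2, (P6 p hp).2.1⟩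
      · intro p hp; exact ⟨(P7 p hp).1, (P7 p hp).2.2, (P7 p hp).2.1⟩
    · exact ⟨C1, C2, C3, C5, C4⟩
    · rw [cntS_append, cntS_append]
      simp only [cntS, List.countP_cons, List.countP_nil] at hm ⊢; omega

lemma moveB {r : ℤ → ℤ → Prop} (hi : ∀ a, ¬ r a a) (ht : ∀ a b c, r a b → r b c → r a c)
    {x y z : ℤ} (hxy : r x y) (hyz : r y z) {u v : List ℤ} {k m : ℕ}
    (h : HasFam r k (u ++ [x, z, y] ++ v) m) : HasFam r k (u ++ [z, x, y] ++ v) m := by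
  obtain ⟨L, hL, ⟨hP, hC⟩, hm⟩ := h
  obtain ⟨U, V, cx, cz, cy, rfl, hU, hV⟩ := split3 hL
  rw [pw3] at hP
  rw [cb3] at hC
  obtain ⟨P1, P2, P3, P4, P5, P6, P7, P8⟩ := hP
  obtain ⟨C1, C2, C3, C4, C5⟩ := hC
  rw [cntS_append, cntS_append] at hm
  by_cases hcc : ∃ c, cx = some c ∧ cz = some c
  · obtain ⟨c, rfl, rfl⟩ := hcc
    have hxz := ht _ _ _ hxy hyz
    cases cy with
    | none =>
      refine fam3_intro (ca := none) (cb := some c) (cc := some c) hU hV ⟨pw3.2 ?_, cb3.2 ?_⟩ ?_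
      · refine ⟨P1, P2, ?_, ?_, ?_, ?_, ?_, P8⟩
        · intro d h; simp at h
        · intro d h; simp at h
        · intro d _ _; exact hxy
        · intro p hp
          refine ⟨fun d _ h => by simp at h, (P6 p hp).1, fun d h1 h2 => ?_⟩
          exact ht _ _ _ ((P6 p hp).1 d h1 h2) hxy
        · intro q hq
          refine ⟨fun d h => by simp at h, (P7 q hq).1, fun d h1 h2 => ?_⟩
          exact ht _ _ _ hyz ((P7 q hq).2.1 d h1 h2)
      · exact ⟨C1, C2, by simp, C4, C4⟩
      · rw [cntS_append, cntS_append]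
        simp [cntS] at hm ⊢; omega
    | some c' =>
      have hne : c ≠ c' := by
        rintro rfl
        exact hi _ (ht _ _ _ hyz (P5 c rfl rfl))
      refine fam3_intro (V := V.map (sw c c')) (ca := some c') (cb := some c) (cc := some c) hU
        (by rw [map_fst_sw, hV]) ⟨pw3.2 ?_, cb3.2 ?_⟩ ?_
      · refine ⟨P1, pw_sw c c' P2, ?_, ?_, ?_, ?_, ?_, ?_⟩
        · intro d h1 h2; simp at h1 h2; omega
        · intro d h1 h2; simp at h1 h2; omega
        · intro d _ _; exact hxy
        · intro p hp
          refine ⟨fun d h1 h2 => ?_, (P6 p hp).1, fun d h1 h2 => ?_⟩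
          · exact ht _ _ _ ((P6 p hp).2.2 d h1 h2) hyz
          · exact ht _ _ _ ((P6 p hp).1 d h1 h2) hxy
        · intro q' hq'
          obtain ⟨q, hq, rfl⟩ := List.mem_map.1 hq'
          refine ⟨fun d h1 h2 => ?_, fun d h1 h2 => ?_, fun d h1 h2 => ?_⟩ <;>
            simp only [Option.some.injEq] at h1 <;> rcases sw_spec h2 with h3 | h3 | h3 <;>
            first
            | (exfalso; omega)
            | exact (P7 q hq).2.1 c rfl h3.1
            | exact ht _ _ _ hxy ((P7 q hq).2.2 c' rfl h3.1)
            | exact (P7 q hq).2.2 c' rfl h3.1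
        · intro p hp q' hq' d h1 h2
          obtain ⟨q, hq, rfl⟩ := List.mem_map.1 hq'
          rcases sw_spec h2 with ⟨h3, rfl⟩ | ⟨h3, rfl⟩ | h3
          · exact ht _ _ _ ((P6 p hp).2.2 _ h1 rfl) (ht _ _ _ hyz ((P7 q hq).2.1 _ rfl h3))
          · exact ht _ _ _ ((P6 p hp).1 _ h1 rfl) (ht _ _ _ hxy ((P7 q hq).2.2 _ rfl h3))
          · exact P8 p hp q hq d h1 h3.1
      · exact ⟨C1, cb_sw (C3 c rfl) (C5 c' rfl) C2, C5, C4, C4⟩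
      · rw [cntS_append, cntS_append, cntS_sw]
        simp [cntS] at hm ⊢; omega
  · refine fam3_intro (ca := cz) (cb := cx) (cc := cy) hU hV ⟨pw3.2 ?_, cb3.2 ?_⟩ ?_
    · refine ⟨P1, P2, ?_, P5, P4, ?_, ?_, P8⟩
      · intro d h1 h2; exact absurd ⟨d, h2, h1⟩ hcc
      · intro p hp; exact ⟨(P6 p hp).2.1, (P6 p hp).1, (P6 p hp).2.2⟩
      · intro p hp; exact ⟨(P7 p hp).2.1, (P7 p hp).1, (P7 p hp).2.2⟩
    · exact ⟨C1, C2, C4, C3, C5⟩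
    · rw [cntS_append, cntS_append]
      simp only [cntS, List.countP_cons, List.countP_nil] at hm ⊢; omega

/-- easy direction of the first move -/
lemma moveA' {r : ℤ → ℤ → Prop} {x y z : ℤ} (hn : ¬ r z x) {u v : List ℤ} {k m : ℕ}
    (h : HasFam r k (u ++ [y, z, x] ++ v) m) : HasFam r k (u ++ [y, x, z] ++ v) m := by
  obtain ⟨L, hL, ⟨hP, hC⟩, hm⟩ := h
  obtain ⟨U, V, cy, cz, cx, rfl, hU, hV⟩ := split3 hL
  rw [pw3] at hP
  rw [cb3] at hC
  obtain ⟨P1, P2, P3, P4, P5, P6, P7, P8⟩ := hP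
  obtain ⟨C1, C2, C3, C4, C5⟩ := hC
  rw [cntS_append, cntS_append] at hm
  refine fam3_intro (ca := cy) (cb := cx) (cc := cz) hU hV ⟨pw3.2 ?_, cb3.2 ?_⟩ ?_
  · refine ⟨P1, P2, P4, P3, ?_, ?_, ?_, P8⟩
    · intro d h1 h2; exact absurd (P5 d h2 h1) hn
    · intro p hp; exact ⟨(P6 p hp).1, (P6 p hp).2.2, (P6 p hp).2.1⟩
    · intro p hp; exact ⟨(P7 p hp).1, (P7 p hp).2.2, (P7 p hp).2.1⟩
  · exact ⟨C1, C2, C3, C5, C4⟩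
  · rw [cntS_append, cntS_append]
    simp only [cntS, List.countP_cons, List.countP_nil] at hm ⊢; omega

/-- easy direction of the second move -/
lemma moveB' {r : ℤ → ℤ → Prop} {x y z : ℤ} (hn : ¬ r z x) {u v : List ℤ} {k m : ℕ}
    (h : HasFam r k (u ++ [z, x, y] ++ v) m) : HasFam r k (u ++ [x, z, y] ++ v) m := by
  obtain ⟨L, hL, ⟨hP, hC⟩, hm⟩ := h
  obtain ⟨U, V, cz, cx, cy, rfl, hU, hV⟩ := split3 hL
  rw [pw3] at hP
  rw [cb3] at hC
  obtain ⟨P1, P2, P3, P4, P5, P6, P7, P8⟩ := hP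
  obtain ⟨C1, C2, C3, C4, C5⟩ := hC
  rw [cntS_append, cntS_append] at hm
  refine fam3_intro (ca := cx) (cb := cz) (cc := cy) hU hV ⟨pw3.2 ?_, cb3.2 ?_⟩ ?_
  · refine ⟨P1, P2, ?_, P5, P4, ?_, ?_, P8⟩
    · intro d h1 h2; exact absurd (P3 d h2 h1) hn
    · intro p hp; exact ⟨(P6 p hp).2.1, (P6 p hp).1, (P6 p hp).2.2⟩
    · intro p hp; exact ⟨(P7 p hp).2.1, (P7 p hp).1, (P7 p hp).2.2⟩
  · exact ⟨C1, C2, C4, C3, C5⟩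
  · rw [cntS_append, cntS_append]
    simp only [cntS, List.countP_cons, List.countP_nil] at hm ⊢; omega

/-- Knuth-type equivalence: families transfer in every context. -/
def KE (l l' : List ℤ) : Prop := ∀ (u v : List ℤ) (k m : ℕ),
  (HasFam (· < ·) k (u ++ l ++ v) m ↔ HasFam (· < ·) k (u ++ l' ++ v) m) ∧
  (HasFam (· > ·) k (u ++ l ++ v) m ↔ HasFam (· > ·) k (u ++ l' ++ v) m)

lemma KE.refl (l : List ℤ) : KE l l := fun _ _ _ _ => ⟨Iff.rfl, Iff.rfl⟩

lemma KE.symm {l l' : List ℤ} (h : KE l l') : KE l' l :=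
  fun u v k m => ⟨(h u v k m).1.symm, (h u v k m).2.symm⟩

lemma KE.trans {l l' l'' : List ℤ} (h : KE l l') (h' : KE l' l'') : KE l l'' :=
  fun u v k m => ⟨(h u v k m).1.trans (h' u v k m).1, (h u v k m).2.trans (h' u v k m).2⟩

lemma KE.ctx {l l' : List ℤ} (h : KE l l') (s t : List ℤ) : KE (s ++ l ++ t) (s ++ l' ++ t) := by
  intro u v k m
  have := h (u ++ s) (t ++ v) k m
  simpa only [List.append_assoc] using this

lemma KE.left {l l' : List ℤ} (h : KE l l') (s : List ℤ) : KE (s ++ l) (s ++ l') := by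
  simpa using h.ctx s []

lemma KE.right {l l' : List ℤ} (h : KE l l') (t : List ℤ) : KE (l ++ t) (l' ++ t) := by
  simpa using h.ctx [] t

lemma KE.cons {l l' : List ℤ} (h : KE l l') (a : ℤ) : KE (a :: l) (a :: l') := h.left [a]

lemma KE_A {x y z : ℤ} (hxy : x < y) (hyz : y < z) : KE [y, x, z] [y, z, x] := by
  intro u v k m
  refine ⟨⟨fun h => ?_, fun h => ?_⟩, ⟨fun h => ?_, fun h => ?_⟩⟩
  · exact moveA (fun a => lt_irrefl a) (fun a b c => lt_trans) hxy hyz h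
  · exact moveA' (by omega) h
  · exact moveA' (by omega) h
  · exact moveA (r := fun a b => a > b) (fun a => lt_irrefl a) (fun a b c h1 h2 => lt_trans h2 h1) hyz hxy h

lemma KE_B {x y z : ℤ} (hxy : x < y) (hyz : y < z) : KE [x, z, y] [z, x, y] := by
  intro u v k m
  refine ⟨⟨fun h => ?_, fun h => ?_⟩, ⟨fun h => ?_, fun h => ?_⟩⟩
  · exact moveB (fun a => lt_irrefl a) (fun a b c => lt_trans) hxy hyz h
  · exact moveB' (by omega) h
  · exact moveB' (by omega) h
  · exact moveB (r := fun a b => a > b) (fun a => lt_irrefl a) (fun a b c h1 h2 => lt_trans h2 h1) hyz hxy h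

end Hollow

namespace Hollow

/-- row insertion -/
def ins (x : ℤ) : List ℤ → List ℤ × Option ℤ
  | [] => ([x], none)
  | y :: b => if x < y then (x :: b, some y) else (y :: (ins x b).1, (ins x b).2)

lemma ins_bump {x z : ℤ} {r : List ℤ} (h : (ins x r).2 = some z) : x < z := by
  induction r with
  | nil => simp [ins] at h
  | cons y b ih =>
    unfold ins at h
    split_ifs at h with hxy
    · simp at h; omega
    · exact ih h

lemma ins_head (x : ℤ) (r : List ℤ) : ∃ h t, (ins x r).1 = h :: t ∧ h ≤ x := by
  cases r with
  | nil => exact ⟨x, [], rfl, le_rfl⟩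
  | cons y b =>
    unfold ins
    split_ifs with hxy
    · exact ⟨x, b, rfl, le_rfl⟩
    · exact ⟨y, _, rfl, by omega⟩

lemma ins_perm (x : ℤ) (r : List ℤ) : ((ins x r).2.toList ++ (ins x r).1).Perm (x :: r) := by
  induction r with
  | nil => simp [ins]
  | cons y b ih =>
    unfold ins
    split_ifs with hxy
    · exact List.Perm.swap _ _ _
    · simp only
      refine List.perm_middle.trans ?_
      exact (ih.cons y).trans (List.Perm.swap _ _ _)

lemma mem_ins {x w : ℤ} {r : List ℤ} (h : w ∈ (ins x r).1) : w = x ∨ w ∈ r := by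
  have := (ins_perm x r).subset (List.mem_append_right _ h)
  simpa using this

lemma ins_sorted {x : ℤ} {r : List ℤ} (hr : r.Pairwise (· < ·)) (hx : x ∉ r) :
    (ins x r).1.Pairwise (· < ·) := by
  induction r with
  | nil => simp [ins]
  | cons y b ih =>
    rw [List.pairwise_cons] at hr
    simp only [List.mem_cons, not_or] at hx
    unfold ins
    split_ifs with hxy
    · refine List.pairwise_cons.2 ⟨fun w hw => ?_, hr.2⟩
      have := hr.1 w hw; omega
    · refine List.pairwise_cons.2 ⟨fun w hw => ?_, ih hr.2 hx.2⟩
      rcases mem_ins hw with rfl | hw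
      · omega
      · exact hr.1 w hw

lemma KE_L1 {x y : ℤ} {b : List ℤ} (hxy : x < y) (hb : (y :: b).Pairwise (· < ·)) :
    KE (y :: b ++ [x]) (y :: x :: b) := by
  induction b generalizing y with
  | nil => exact KE.refl _
  | cons b1 b ih =>
    have hy1 : y < b1 := (List.pairwise_cons.1 hb).1 b1 (by simp)
    have h1 := (ih (y := b1) (by omega) (List.pairwise_cons.1 hb).2).cons y
    exact h1.trans ((KE_A hxy hy1).symm.right b)

lemma KE_ins {x : ℤ} {r : List ℤ} (hr : r.Pairwise (· < ·)) (hx : x ∉ r) :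
    KE (r ++ [x]) ((ins x r).2.toList ++ (ins x r).1) := by
  induction r with
  | nil => exact KE.refl _
  | cons y b ih =>
    by_cases hxy : x < y
    · have : ins x (y :: b) = (x :: b, some y) := by rw [ins, if_pos hxy]
      rw [this]
      exact KE_L1 hxy hr
    · have he : ins x (y :: b) = (y :: (ins x b).1, (ins x b).2) := by rw [ins, if_neg hxy]
      rw [he]
      simp only [List.mem_cons, not_or] at hx
      have hr' := List.pairwise_cons.1 hr
      have h1 := (ih hr'.2 hx.2).cons y
      refine h1.trans ?_
      cases ho : (ins x b).2 with
      | none => exact KE.refl _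
      | some z =>
        have hz := ins_bump ho
        obtain ⟨h, t, ht, hhx⟩ := ins_head x b
        have hh : y < h := by
          have : h ∈ (ins x b).1 := by rw [ht]; simp
          rcases mem_ins this with rfl | h2
          · omega
          · exact hr'.1 h h2
        simp only [ht]
        exact (KE_B hh (by omega)).right t

/-- rows of tableaux, column condition -/
def Dom : List ℤ → List ℤ → Prop
  | _, [] => True
  | [], _ :: _ => False
  | a :: r, b :: s => a < b ∧ Dom r s

lemma Dom_nil (r : List ℤ) : Dom r [] := by cases r <;> trivial

lemma Dom.length {r s : List ℤ} (h : Dom r s) : s.length ≤ r.length := by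
  induction r generalizing s with
  | nil => cases s with
    | nil => simp
    | cons b s => exact h.elim
  | cons a r ih => cases s with
    | nil => simp
    | cons b s => have := ih h.2; simpa using this

lemma Dom.get {r s : List ℤ} (h : Dom r s) {j : ℕ} {b : ℤ} (hb : s[j]? = some b) :
    ∃ a, r[j]? = some a ∧ a < b := by
  induction r generalizing s j with
  | nil => cases s with
    | nil => simp at hb
    | cons b s => exact h.elim
  | cons a r ih => cases s with
    | nil => simp at hb
    | cons b' s =>
      cases j with
      | zero => simp at hb; subst hb; exact ⟨a, by simp, h.1⟩
      | succ j => simp at hb; simpa using ih h.2 hb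

lemma Dom_ins_left {x : ℤ} {r s : List ℤ} (h : Dom r s) : Dom (ins x r).1 s := by
  induction r generalizing s with
  | nil => cases s with
    | nil => exact Dom_nil _
    | cons b s => exact h.elim
  | cons a r ih => cases s with
    | nil => exact Dom_nil _
    | cons b' s =>
      unfold ins
      split_ifs with hxy
      · exact ⟨by have := h.1; omega, h.2⟩
      · exact ⟨h.1, ih h.2⟩

lemma Dom_ins {x z : ℤ} {r s : List ℤ} (h : Dom r s) (hz : (ins x r).2 = some z) :
    Dom (ins x r).1 (ins z s).1 := by
  have hxz := ins_bump hz
  induction r generalizing s with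
  | nil => simp [ins] at hz
  | cons y b ih =>
    by_cases hxy : x < y
    · have he : ins x (y :: b) = (x :: b, some y) := by rw [ins, if_pos hxy]
      rw [he] at hz ⊢
      simp only [Option.some.injEq] at hz
      subst hz
      cases s with
      | nil => exact ⟨hxy, Dom_nil _⟩
      | cons t s =>
        have : ins y (t :: s) = (y :: s, some t) := by rw [ins, if_pos h.1]
        rw [this]
        exact ⟨hxy, h.2⟩
    · have he : ins x (y :: b) = (y :: (ins x b).1, (ins x b).2) := by rw [ins, if_neg hxy]
      rw [he] at hz ⊢
      simp only at hz ⊢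
      cases s with
      | nil => exact ⟨by omega, Dom_nil _⟩
      | cons t s =>
        by_cases hzt : z < t
        · have : ins z (t :: s) = (z :: s, some t) := by rw [ins, if_pos hzt]
          rw [this]
          exact ⟨by omega, Dom_ins_left h.2⟩
        · have : ins z (t :: s) = (t :: (ins z s).1, (ins z s).2) := by rw [ins, if_neg hzt]
          rw [this]
          exact ⟨h.1, ih h.2 hz⟩

def Tab : List (List ℤ) → Prop
  | [] => True
  | r :: T => r.Pairwise (· < ·) ∧ Dom r (T.headD []) ∧ Tab T

def word : List (List ℤ) → List ℤ
  | [] => []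
  | r :: T => word T ++ r

def insT (x : ℤ) : List (List ℤ) → List (List ℤ)
  | [] => [[x]]
  | r :: T => (ins x r).1 :: (match (ins x r).2 with
    | none => T
    | some z => insT z T)

lemma insT_head (x : ℤ) (T : List (List ℤ)) : (insT x T).headD [] = (ins x (T.headD [])).1 := by
  cases T with
  | nil => rfl
  | cons r T => rfl

lemma insT_perm (x : ℤ) (T : List (List ℤ)) : (word (insT x T)).Perm (x :: word T) := by
  induction T generalizing x with
  | nil => simp [insT, word]
  | cons r T ih =>
    have hp := ins_perm x r
    unfold insT
    cases ho : (ins x r).2 with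
    | none =>
      rw [ho] at hp
      simp only [word]
      exact (List.Perm.append_left _ hp).trans List.perm_middle
    | some z =>
      rw [ho] at hp
      simp only [word]
      refine ((ih z).append_right _).trans ?_
      refine List.Perm.trans ?_ ((List.Perm.append_left (word T) hp).trans List.perm_middle)
      exact List.perm_middle.symm

lemma insT_tab {x : ℤ} {T : List (List ℤ)} (hT : Tab T) (hx : (x :: word T).Nodup) :
    Tab (insT x T) ∧ KE (word T ++ [x]) (word (insT x T)) := by
  induction T generalizing x with
  | nil => exact ⟨⟨by simp, Dom_nil _, trivial⟩, KE.refl _⟩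
  | cons r T ih =>
    have hxr : x ∉ r := by
      intro h; exact (List.nodup_cons.1 hx).1 (List.mem_append_right _ h)
    have hp := ins_perm x r
    have hK := KE_ins hT.1 hxr
    unfold insT
    cases ho : (ins x r).2 with
    | none =>
      rw [ho] at hK
      refine ⟨⟨ins_sorted hT.1 hxr, Dom_ins_left hT.2.1, hT.2.2⟩, ?_⟩
      simp only [word, List.append_assoc]
      exact hK.left _
    | some z =>
      rw [ho] at hK
      have hnd : (z :: word T).Nodup := by
        have hz : z = x ∨ z ∈ r := by
          have : z ∈ (ins x r).2.toList ++ (ins x r).1 := by simp [ho]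
          simpa using hp.subset this
        simp only [word] at hx
        have h1 := List.nodup_cons.1 hx
        have h2 := List.nodup_append.1 h1.2
        refine List.nodup_cons.2 ⟨fun hzT => ?_, h2.1⟩
        rcases hz with rfl | hz
        · exact h1.1 (List.mem_append_left _ hzT)
        · exact h2.2.2 z hzT z hz rfl
      obtain ⟨i1, i2⟩ := ih hT.2.2 hnd
      refine ⟨⟨ins_sorted hT.1 hxr, ?_, i1⟩, ?_⟩
      · simp only
        rw [insT_head]
        exact Dom_ins hT.2.1 ho
      · simp only [word, List.append_assoc]
        refine (hK.left _).trans ?_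
        have := i2.right (ins x r).1
        simpa using this

lemma exists_tab (l : List ℤ) (hl : l.Nodup) :
    ∃ T, Tab T ∧ KE l (word T) ∧ (word T).Perm l := by
  induction l using List.reverseRecOn with
  | nil => exact ⟨[], trivial, KE.refl _, List.Perm.refl _⟩
  | append_singleton l x ih =>
    have hl' : (x :: l).Nodup := (List.perm_append_singleton x l).nodup_iff.1 hl
    obtain ⟨T, h1, h2, h3⟩ := ih (List.nodup_cons.1 hl').2
    obtain ⟨i1, i2⟩ := insT_tab (x := x) h1 ((h3.cons x).nodup_iff.2 hl')
    refine ⟨insT x T, i1, (h2.right [x]).trans i2, ?_⟩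
    exact (insT_perm x T).trans ((h3.cons x).trans (List.perm_append_singleton x l).symm)

lemma row_fam (T : List (List ℤ)) (hT : Tab T) (k : ℕ) :
    HasFam (· < ·) k (word T) ((T.take k).map List.length).sum := by
  induction T generalizing k with
  | nil => exact ⟨[], rfl, ⟨by simp, by simp⟩, by simp⟩
  | cons r T ih =>
    cases k with
    | zero =>
      refine ⟨(word (r :: T)).map (fun a => (a, none)), by simp [Function.comp_def], ⟨?_, by simp⟩, by simp⟩
      rw [List.pairwise_map]
      exact List.pairwise_of_forall (fun a b c h => by simp at h)
    | succ k =>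
      obtain ⟨L, h1, ⟨h2, h3⟩, h4⟩ := ih hT.2.2 k
      refine ⟨L ++ r.map (fun a => (a, some k)), by simp [word, h1, Function.comp_def], ⟨?_, ?_⟩, ?_⟩
      · refine List.pairwise_append.2 ⟨h2, ?_, ?_⟩
        · rw [List.pairwise_map]
          exact hT.1.imp fun h c _ _ => h
        · intro p hp q hq c hc hc'
          obtain ⟨a, ha, rfl⟩ := List.mem_map.1 hq
          have := h3 p hp c hc
          simp at hc'; omega
      · intro p hp c hc
        rcases List.mem_append.1 hp with hp | hp
        · have := h3 p hp c hc; omega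
        · obtain ⟨a, ha, rfl⟩ := List.mem_map.1 hp
          simp at hc; omega
      · rw [cntS_append]
        have : cntS (r.map (fun a => (a, some k))) = r.length := by
          unfold cntS; rw [List.countP_map]; simp [Function.comp_def]
        rw [this, List.take_succ_cons, List.map_cons, List.sum_cons]; omega

def colRow (l : ℕ) (j : ℕ) : List ℤ → List (ℤ × Option ℕ)
  | [] => []
  | a :: r => (a, if j < l then some j else none) :: colRow l (j + 1) r

lemma colRow_map (l j : ℕ) (r : List ℤ) : (colRow l j r).map Prod.fst = r := by
  induction r generalizing j with
  | nil => rfl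
  | cons a r ih => simp [colRow, ih]

lemma colRow_mem {l j : ℕ} {r : List ℤ} {p : ℤ × Option ℕ} (h : p ∈ colRow l j r) {c : ℕ}
    (hc : p.2 = some c) : j ≤ c ∧ c < l ∧ r[c - j]? = some p.1 := by
  induction r generalizing j with
  | nil => simp [colRow] at h
  | cons a r ih =>
    rcases List.mem_cons.1 h with rfl | h
    · simp only at hc
      split_ifs at hc with hj
      simp at hc
      subst hc
      simp [hj]
    · obtain ⟨h1, h2, h3⟩ := ih h
      refine ⟨by omega, h2, ?_⟩
      have : c - j = (c - (j + 1)) + 1 := by omega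
      rw [this]; simpa using h3

lemma colRow_pw (R : ℤ → ℤ → Prop) (l j : ℕ) (r : List ℤ) : (colRow l j r).Pairwise (RR R) := by
  induction r generalizing j with
  | nil => simp [colRow]
  | cons a r ih =>
    refine List.pairwise_cons.2 ⟨fun p hp c h1 h2 => ?_, ih _⟩
    have := colRow_mem hp h2
    simp only at h1
    split_ifs at h1
    simp at h1; omega

lemma colRow_cnt (l j : ℕ) (r : List ℤ) : cntS (colRow l j r) = min (l - j) r.length := by
  induction r generalizing j with
  | nil => simp [colRow, cntS]
  | cons a r ih =>
    have h1 := ih (j + 1)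
    unfold cntS at *
    simp only [colRow, List.countP_cons, h1, List.length_cons]
    split_ifs <;> simp_all <;> omega

lemma col_fam (T : List (List ℤ)) (hT : Tab T) (l : ℕ) :
    ∃ L, L.map Prod.fst = word T ∧ Fam (· > ·) l L ∧
      cntS L = (T.map (fun r => min l r.length)).sum ∧
      ∀ p ∈ L, ∀ c, p.2 = some c → ∃ b, (T.headD [])[c]? = some b ∧ b ≤ p.1 := by
  induction T with
  | nil => exact ⟨[], rfl, ⟨by simp, by simp⟩, by simp [cntS], by simp⟩
  | cons r T ih =>
    obtain ⟨L, h1, ⟨h2, h3⟩, h4, h5⟩ := ih hT.2.2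
    refine ⟨L ++ colRow l 0 r, by simp [word, h1, colRow_map], ⟨?_, ?_⟩, ?_, ?_⟩
    · refine List.pairwise_append.2 ⟨h2, colRow_pw _ _ _ _, ?_⟩
      intro p hp q hq c hc hc'
      obtain ⟨b, hb, hbp⟩ := h5 p hp c hc
      obtain ⟨a, ha, hab⟩ := hT.2.1.get hb
      have := (colRow_mem hq hc').2.2
      rw [Nat.sub_zero, ha] at this
      simp at this
      omega
    · intro p hp c hc
      rcases List.mem_append.1 hp with hp | hp
      · exact h3 p hp c hc
      · exact (colRow_mem hp hc).2.1
    · rw [cntS_append, h4, colRow_cnt]; simp; omega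
    · intro p hp c hc
      rcases List.mem_append.1 hp with hp | hp
      · obtain ⟨b, hb, hbp⟩ := h5 p hp c hc
        obtain ⟨a, ha, hab⟩ := hT.2.1.get hb
        exact ⟨a, by simpa using ha, by omega⟩
      · have := (colRow_mem hp hc).2.2
        exact ⟨p.1, by simpa using this, le_rfl⟩

end Hollow

namespace Hollow

lemma cntS_eq (L : List (ℤ × Option ℕ)) :
    cntS L = ((Finset.Icc 1 L.length).filter
      (fun i => ∃ p, L[i - 1]? = some p ∧ p.2.isSome)).card := by
  induction L using List.reverseRecOn with
  | nil => simp [cntS]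
  | append_singleton L p ih =>
    rw [cntS_append, ih, List.length_append, List.length_singleton]
    have h1 : Finset.Icc 1 (L.length + 1) = insert (L.length + 1) (Finset.Icc 1 L.length) := by
      ext i; simp only [Finset.mem_Icc, Finset.mem_insert]; omega
    rw [h1, Finset.filter_insert]
    have h2 : (Finset.Icc 1 L.length).filter
        (fun i => ∃ q, (L ++ [p])[i - 1]? = some q ∧ q.2.isSome) =
        (Finset.Icc 1 L.length).filter (fun i => ∃ q, L[i - 1]? = some q ∧ q.2.isSome) := by
      refine Finset.filter_congr fun i hi => ?_
      rw [Finset.mem_Icc] at hi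
      rw [List.getElem?_append_left (by omega)]
    rw [h2]
    split_ifs with h
    · rw [Finset.card_insert_of_notMem (by simp)]
      simp at h
      simp [cntS, h]
    · simp at h
      simp [cntS, h]

lemma fam_greene {r : ℤ → ℤ → Prop} {N k m : ℕ} {x : ℕ → ℤ} {φ : ℤ → ℤ}
    (hr : ∀ a b, r a b → φ a ≤ φ b)
    (h : HasFam r k ((List.range N).map (fun i => x (i + 1))) m) :
    m ≤ greeneC N (fun i => φ (x i)) k := by
  obtain ⟨L, h1, ⟨h2, h3⟩, h4⟩ := h
  have hlen : L.length = N := by simpa using congrArg List.length h1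
  rw [cntS_eq, hlen] at h4
  refine h4.trans (IsFam.le (f := fun i => ((L[i - 1]?.getD (0, none)).2).getD 0) ⟨?_, ?_, ?_⟩)
  · intro i hi
    exact Finset.mem_Icc.1 (Finset.mem_filter.1 hi).1
  · intro i hi
    obtain ⟨-, p, hp, hs⟩ := Finset.mem_filter.1 hi
    obtain ⟨c, hc⟩ := Option.isSome_iff_exists.1 hs
    simp only [hp, Option.getD_some, hc]
    exact h3 p (List.mem_of_getElem? hp) c hc
  · intro i hi j hj hij hf
    obtain ⟨hi1, p, hp, hs⟩ := Finset.mem_filter.1 hi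
    obtain ⟨hj1, q, hq, ht⟩ := Finset.mem_filter.1 hj
    obtain ⟨c, hc⟩ := Option.isSome_iff_exists.1 hs
    obtain ⟨d, hd⟩ := Option.isSome_iff_exists.1 ht
    simp only [hp, hq, Option.getD_some, hc, hd] at hf
    subst hf
    rw [Finset.mem_Icc] at hi1 hj1
    have key : ∀ i p, 1 ≤ i → L[i - 1]? = some p → p.1 = x i := by
      intro i p hi1 hp
      have h5 := congrArg (fun l => l[i - 1]?) h1
      simp only [List.getElem?_map, hp, Option.map_some] at h5
      have h6 := List.getElem?_eq_some_iff.1 hp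
      obtain ⟨h7, -⟩ := h6
      rw [List.getElem?_range (by omega)] at h5
      simp at h5
      rw [h5]; congr 1; omega
    obtain ⟨a1, a2⟩ := List.getElem?_eq_some_iff.1 hp
    obtain ⟨b1, b2⟩ := List.getElem?_eq_some_iff.1 hq
    have h8 := List.pairwise_iff_getElem.1 h2 (i - 1) (j - 1) a1 b1 (by omega)
    rw [a2, b2] at h8
    have h9 := h8 c hc hd
    rw [key i p hi1.1 hp, key j q hj1.1 hq] at h9
    exact hr _ _ h9

lemma weak_dual {N : ℕ} {x : ℕ → ℤ} (hx : ∀ i j, 1 ≤ i → i < j → j ≤ N → x i ≠ x j) (k l : ℕ) :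
    greeneC N x k + greeneC N (fun i => - x i) l ≤ N + k * l := by
  obtain ⟨S, f, hf, hS⟩ := exists_fam N x k
  obtain ⟨S', g, hg, hS'⟩ := exists_fam N (fun i => - x i) l
  rw [← hS, ← hS', ← Finset.card_union_add_card_inter]
  have h1 : (S ∪ S').card ≤ N := card_le_of_range (fun i hi => by
    rcases Finset.mem_union.1 hi with h | h
    · exact hf.1 i h
    · exact hg.1 i h)
  have h2 : (S ∩ S').card ≤ (Finset.range k ×ˢ Finset.range l).card := by
    refine Finset.card_le_card_of_injOn (fun i => (f i, g i)) ?_ ?_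
    · intro i hi
      have := Finset.mem_inter.1 hi
      simp [hf.2.1 i this.1, hg.2.1 i this.2]
    · have key : ∀ i ∈ S ∩ S', ∀ j ∈ S ∩ S', i < j → (f i, g i) = (f j, g j) → False := by
        intro i hi j hj hij he
        rw [Finset.mem_inter] at hi hj
        simp only [Prod.mk.injEq] at he
        have a1 := hf.2.2 i hi.1 j hj.1 hij he.1
        have a2 := hg.2.2 i hi.2 j hj.2 hij he.2
        beta_reduce at a2
        exact hx i j (hf.1 i hi.1).1 hij (hf.1 j hj.1).2 (by omega)
      intro i hi j hj he
      rcases lt_trichotomy i j with h | h | h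
      · exact (key i hi j hj h he).elim
      · exact h
      · exact (key j hj i hi h he.symm).elim
  simp at h2
  omega

lemma sum_take (t : List ℕ) (k : ℕ) : (t.take k).sum = ∑ i ∈ Finset.range k, t.getD i 0 := by
  induction t generalizing k with
  | nil => simp
  | cons a t ih =>
    cases k with
    | zero => simp
    | succ k => rw [Finset.sum_range_succ', List.take_succ_cons, List.sum_cons, ih]; simp; omega

lemma sum_map_min (t : List ℕ) (l M : ℕ) (hM : t.length ≤ M) :
    (t.map (fun a => min l a)).sum = ∑ i ∈ Finset.range M, min l (t.getD i 0) := by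
  induction t generalizing M with
  | nil => simp
  | cons a t ih =>
    cases M with
    | zero => simp at hM
    | succ M =>
      rw [Finset.sum_range_succ', List.map_cons, List.sum_cons, ih M (by simpa using hM)]
      simp; omega

lemma tab_anti (T : List (List ℤ)) (hT : Tab T) :
    Antitone (fun i => (T.map List.length).getD i 0) := by
  refine antitone_nat_of_succ_le fun i => ?_
  induction T generalizing i with
  | nil => simp
  | cons r T ih =>
    cases i with
    | zero =>
      have := hT.2.1.length
      cases T with
      | nil => simp
      | cons s T => simpa using this
    | succ i => simpa using ih hT.2.2 i

lemma word_length (T : List (List ℤ)) : (word T).length = (T.map List.length).sum := by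
  induction T with
  | nil => rfl
  | cons r T ih => simp [word, ih]; omega

lemma sum_split_at (g : ℕ → ℕ) {k M : ℕ} (h : k ≤ M) :
    ∑ i ∈ Finset.range M, g i = ∑ i ∈ Finset.range k, g i + ∑ i ∈ Finset.Ico k M, g i :=
  (Finset.sum_range_add_sum_Ico g h).symm

theorem greene_dual {N : ℕ} {x : ℕ → ℤ} (hx : ∀ i j, 1 ≤ i → i < j → j ≤ N → x i ≠ x j) :
    ∃ lam : ℕ → ℕ, ∃ M0 : ℕ, Antitone lam ∧ (∀ i, M0 ≤ i → lam i = 0) ∧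
      (∀ k, greeneC N x k = ∑ i ∈ Finset.range k, lam i) ∧
      ∀ M, M0 ≤ M → ∀ l, greeneC N (fun i => - x i) l = ∑ i ∈ Finset.range M, min l (lam i) := by
  obtain ⟨T, hT, hK, hP⟩ := exists_tab ((List.range N).map (fun i => x (i + 1))) (by
    refine List.Nodup.map_on ?_ List.nodup_range
    intro i hi j hj he
    simp at hi hj
    by_contra hne
    rcases lt_or_gt_of_ne hne with h | h
    · exact hx (i + 1) (j + 1) (by omega) (by omega) (by omega) he
    · exact hx (j + 1) (i + 1) (by omega) (by omega) (by omega) he.symm)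
  have hA := tab_anti T hT
  set lam : ℕ → ℕ := fun i => (T.map List.length).getD i 0 with hlam
  have h0 : ∀ i, T.length ≤ i → lam i = 0 := by
    intro i hi
    simp [hlam, hi]
  have hN : ∀ M, T.length ≤ M → ∑ i ∈ Finset.range M, lam i = N := by
    intro M hM
    have h1 := sum_take (T.map List.length) M
    rw [List.take_of_length_le (by simpa using hM), ← word_length, hP.length_eq] at h1
    rw [List.length_map, List.length_range] at h1
    exact h1.symm
  have hc : ∀ k, ∑ i ∈ Finset.range k, lam i ≤ greeneC N x k := by
    intro k
    have h1 := row_fam T hT k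
    have h2 := (hK [] [] k _).1.2 (by simpa using h1)
    have h3 := fam_greene (φ := id) (fun a b h => le_of_lt h) (by simpa using h2)
    rw [sum_take] at h3
    exact h3
  have hd : ∀ M, T.length ≤ M → ∀ l,
      ∑ i ∈ Finset.range M, min l (lam i) ≤ greeneC N (fun i => - x i) l := by
    intro M hM l
    obtain ⟨L, a1, a2, a3, -⟩ := col_fam T hT l
    have h1 : HasFam (· > ·) l (word T) (T.map (fun r => min l r.length)).sum :=
      ⟨L, a1, a2, a3.ge⟩
    have h2 := (hK [] [] l _).2.2 (by simpa using h1)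
    have h3 := fam_greene (φ := fun a => -a) (fun a b h => by
      have : b < a := h
      omega) (by simpa using h2)
    have h4 := sum_map_min (T.map List.length) l M (by simpa using hM)
    rw [List.map_map] at h4
    rw [← h4]
    exact h3
  refine ⟨lam, T.length, hA, h0, fun k => le_antisymm ?_ (hc k), fun M hM l =>
    le_antisymm ?_ (hd M hM l)⟩
  · have h1 := weak_dual hx k (lam k)
    have h2 := hd (T.length + k) (by omega) (lam k)
    have h3 := hN (T.length + k) (by omega)
    rw [sum_split_at _ (show k ≤ T.length + k by omega)] at h2 h3
    have h4 : ∑ i ∈ Finset.range k, min (lam k) (lam i) = k * lam k := by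
      rw [Finset.sum_congr rfl (g := fun _ => lam k)]
      · simp
      · intro i hi
        exact min_eq_left (hA (Finset.mem_range.1 hi).le)
    have h5 : ∑ i ∈ Finset.Ico k (T.length + k), min (lam k) (lam i) =
        ∑ i ∈ Finset.Ico k (T.length + k), lam i := by
      refine Finset.sum_congr rfl fun i hi => ?_
      exact min_eq_right (hA (Finset.mem_Ico.1 hi).1)
    omega
  · have hex : ∃ k, lam k ≤ l := ⟨M, by rw [h0 M hM]; omega⟩
    obtain ⟨k, hk1, hk2⟩ : ∃ k, lam k ≤ l ∧ ∀ i < k, l ≤ lam i := by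
      classical
      refine ⟨Nat.find hex, Nat.find_spec hex, fun i hi => ?_⟩
      have := Nat.find_min hex hi; omega
    have hkM : ∃ k ≤ M, (∀ i < k, l ≤ lam i) ∧ ∀ i, k ≤ i → lam i ≤ l := by
      by_cases h : k ≤ M
      · exact ⟨k, h, hk2, fun i hi => (hA hi).trans hk1⟩
      · refine ⟨M, le_rfl, fun i hi => hk2 i (by omega), fun i hi => ?_⟩
        rw [h0 i (by omega)]; omega
    obtain ⟨k, hkM, hk1, hk2⟩ := hkM
    have h1 := weak_dual hx k l
    have h2 := hc k
    have h3 := hN M hM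
    rw [sum_split_at _ hkM] at h3 ⊢
    have h4 : ∑ i ∈ Finset.range k, min l (lam i) = k * l := by
      rw [Finset.sum_congr rfl (g := fun _ => l)]
      · simp
      · intro i hi
        exact min_eq_left (hk1 i (Finset.mem_range.1 hi))
    have h5 : ∑ i ∈ Finset.Ico k M, min l (lam i) = ∑ i ∈ Finset.Ico k M, lam i := by
      refine Finset.sum_congr rfl fun i hi => ?_
      exact min_eq_right (hk2 i (Finset.mem_Ico.1 hi).1)
    omega

end Hollow

namespace Hollow

lemma Cen.neg {n : ℕ} {a : ℤ} {y y' : ℕ → ℤ} (C : Cen n a y y') :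
    Cen n a (fun i => - y' i) (fun i => - y i) where
  hn := C.hn
  ha := C.ha
  y1 := by rw [C.z1]
  y2 := by rw [C.z2]; ring
  z1 := by rw [C.y1]; ring
  z2 := by rw [C.y2]
  eq := fun i h1 h2 h3 h4 => by rw [C.eq i h1 h2 h3 h4]
  sym := fun i h1 h2 => by
    have hn := C.hn
    by_cases h3 : i = n
    · have : 2 * n + 1 - i = n + 1 := by omega
      rw [this, h3, C.z1, C.z2]
    · by_cases h4 : i = n + 1
      · have : 2 * n + 1 - i = n := by omega
        rw [this, h4, C.z1, C.z2]; ring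
      · rw [C.eq i h1 h2 h3 h4, C.eq (2 * n + 1 - i) (by omega) (by omega) (by omega) (by omega),
          C.sym i h1 h2]

lemma rowEv_step {p q : ℕ → ℕ} {i : ℕ} (h : p i = q i + 1) (ho : ¬ Even (i + p i)) :
    rowEv p i = rowEv q i := by
  unfold rowEv
  rw [h] at ho ⊢
  have : Finset.Icc 1 (q i + 1) = insert (q i + 1) (Finset.Icc 1 (q i)) := by
    ext j; simp only [Finset.mem_Icc, Finset.mem_insert]; omega
  rw [this, Finset.filter_insert, if_neg ho]

lemma rowEv_eq {p q : ℕ → ℕ} {i : ℕ} (h : p i = q i) : rowEv p i = rowEv q i := by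
  unfold rowEv; rw [h]

lemma greene_zero (N : ℕ) (x : ℕ → ℤ) : greeneC N x 0 = 0 := by
  obtain ⟨S, f, hf, hc⟩ := exists_fam N x 0
  rw [← hc, Finset.card_eq_zero]
  refine Finset.eq_empty_of_forall_notMem fun i hi => ?_
  have := hf.2.1 i hi; omega

lemma col_cmp {lam mu : ℕ → ℕ} (hl : Antitone lam) (hm : Antitone mu) {r j M : ℕ} (hr : r < M)
    (h1 : lam r = j + 1) (h2 : mu r = j) :
    ∑ i ∈ Finset.range M, min (j + 1) (mu i) + ∑ i ∈ Finset.range M, min j (lam i) <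
    ∑ i ∈ Finset.range M, min (j + 1) (lam i) + ∑ i ∈ Finset.range M, min j (mu i) := by
  rw [← Finset.sum_add_distrib, ← Finset.sum_add_distrib]
  refine Finset.sum_lt_sum (fun i _ => ?_) ⟨r, Finset.mem_range.2 hr, by omega⟩
  rcases le_total i r with h | h
  · have := hl h; omega
  · have := hm h; omega

theorem cen_rowEv {n : ℕ} {a : ℤ} {y y' : ℕ → ℤ} (C : Cen n a y y')
    (hy : ∀ i j, 1 ≤ i → i < j → j ≤ 2 * n → y i ≠ y j)
    (hy' : ∀ i j, 1 ≤ i → i < j → j ≤ 2 * n → y' i ≠ y' j) (i : ℕ) (hi : 1 ≤ i) :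
    rowEv (rsShape (2 * n) y) i = rowEv (rsShape (2 * n) y') i := by
  obtain ⟨lam, M1, l1, l2, l3, l4⟩ := greene_dual hy
  obtain ⟨mu, M2, m1, m2, m3, m4⟩ := greene_dual hy'
  obtain ⟨r, rfl⟩ : ∃ r, i = r + 1 := ⟨i - 1, by omega⟩
  have C' := C.neg
  have e1 : rsShape (2 * n) y (r + 1) = lam r := by
    unfold rsShape; rw [l3, l3, Nat.add_sub_cancel, Finset.sum_range_succ]; omega
  have e2 : rsShape (2 * n) y' (r + 1) = mu r := by
    unfold rsShape; rw [m3, m3, Nat.add_sub_cancel, Finset.sum_range_succ]; omega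
  have a1 := c_le C r
  have a2 := c_le_succ C r
  have a3 := c_le C (r + 1)
  have a4 := c_le_succ C (r + 1)
  have s1 : greeneC (2 * n) y (r + 1) = greeneC (2 * n) y r + lam r := by
    rw [l3, l3, Finset.sum_range_succ]
  have s2 : greeneC (2 * n) y' (r + 1) = greeneC (2 * n) y' r + mu r := by
    rw [m3, m3, Finset.sum_range_succ]
  set M := M1 + M2 + r + 1 with hM
  rcases lt_trichotomy (lam r) (mu r) with h | h | h
  · have hmu : mu r = lam r + 1 := by omega
    have hr : ¬ Even r := fun he => by
      have := diff_up C he (by omega); omega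
    have hc := col_cmp (M := M) m1 l1 (r := r) (j := lam r) (by omega) hmu rfl
    rw [← m4 M (by omega), ← m4 M (by omega), ← l4 M (by omega), ← l4 M (by omega)] at hc
    have b1 := c_le C' (lam r)
    have b2 := c_le_succ C' (lam r)
    have b3 := c_le C' (lam r + 1)
    have b4 := c_le_succ C' (lam r + 1)
    have hj : ¬ Even (lam r + 1) := fun he => by
      have := diff_down C' he (by omega); omega
    refine (rowEv_step (by rw [e1, e2, hmu]) ?_).symm
    rw [e2, hmu]
    rw [Nat.even_iff] at *
    omega
  · exact rowEv_eq (by rw [e1, e2, h])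
  · have hmu : lam r = mu r + 1 := by omega
    have hr : ¬ Even (r + 1) := fun he => by
      have := diff_down C he (by omega); omega
    have hc := col_cmp (M := M) l1 m1 (r := r) (j := mu r) (by omega) hmu rfl
    rw [← m4 M (by omega), ← m4 M (by omega), ← l4 M (by omega), ← l4 M (by omega)] at hc
    have b1 := c_le C' (mu r)
    have b2 := c_le_succ C' (mu r)
    have b3 := c_le C' (mu r + 1)
    have b4 := c_le_succ C' (mu r + 1)
    have hj : ¬ Even (mu r) := fun he => by
      have := diff_up C' he (by omega); omega
    refine rowEv_step (by rw [e1, e2, hmu]) ?_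
    rw [e1, hmu]
    rw [Nat.even_iff] at *
    omega

lemma greene_congr {N : ℕ} {x x' : ℕ → ℤ} (h : ∀ i, 1 ≤ i → i ≤ N → x i = x' i) (k : ℕ) :
    greeneC N x k = greeneC N x' k := by
  have key : ∀ {x x' : ℕ → ℤ}, (∀ i, 1 ≤ i → i ≤ N → x i = x' i) →
      greeneC N x k ≤ greeneC N x' k := by
    intro x x' h
    obtain ⟨S, f, hf, hc⟩ := exists_fam N x k
    rw [← hc]
    refine IsFam.le (f := f) ⟨hf.1, hf.2.1, fun i hi j hj hij he => ?_⟩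
    rw [← h i (hf.1 i hi).1 (hf.1 i hi).2, ← h j (hf.1 j hj).1 (hf.1 j hj).2]
    exact hf.2.2 i hi j hj hij he
  exact le_antisymm (key h) (key fun i h1 h2 => (h i h1 h2).symm)

lemma rsShape_congr {N : ℕ} {x x' : ℕ → ℤ} (h : ∀ k, greeneC N x k = greeneC N x' k) :
    rsShape N x = rsShape N x' := by
  funext k; unfold rsShape; rw [h, h]

lemma preMinus_inj {n : ℕ} {x : ℕ → ℤ} (h0 : ∀ i, 1 ≤ i → i ≤ n → x i ≠ 0)
    (h : ∀ i j, 1 ≤ i → i < j → j ≤ n → x i ≠ x j ∧ x i ≠ - x j) :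
    ∀ i j, 1 ≤ i → i < j → j ≤ 2 * n → preMinus n x i ≠ preMinus n x j := by
  intro i j hi hij hj
  unfold preMinus
  split_ifs with h1 h2 h2
  · have := h (n + 1 - j) (n + 1 - i) (by omega) (by omega) (by omega)
    omega
  · rcases lt_trichotomy (n + 1 - i) (j - n) with h3 | h3 | h3
    · have := h _ _ (by omega) h3 (by omega)
      omega
    · rw [h3]
      have := h0 (j - n) (by omega) (by omega)
      omega
    · have := h _ _ (by omega) h3 (by omega)
      omega
  · omega
  · exact (h (i - n) (j - n) (by omega) (by omega) (by omega)).1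

def fl (x : ℕ → ℤ) : ℕ → ℤ := fun k => if k = 1 then - x k else x k

lemma pre_cen {n : ℕ} {x : ℕ → ℤ} (hn : 1 ≤ n) (hx : 0 < x 1) :
    Cen n (x 1) (preMinus n x) (preMinus n (fl x)) where
  hn := hn
  ha := hx
  y1 := by simp [preMinus]
  y2 := by simp [preMinus]
  z1 := by simp [preMinus, fl]
  z2 := by simp [preMinus, fl]
  eq := fun i h1 h2 h3 h4 => by
    unfold preMinus fl
    split_ifs <;> first | rfl | omega
  sym := fun i h1 h2 => by
    unfold preMinus
    split_ifs
    · omega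
    · congr 2; omega
    · rw [neg_neg]; congr 1; omega
    · omega

lemma fl_fl (x : ℕ → ℤ) : fl (fl x) = x := by
  funext k; unfold fl; split_ifs <;> simp

theorem flip_rowEv {n : ℕ} {x : ℕ → ℤ} (h0 : ∀ i, 1 ≤ i → i ≤ n → x i ≠ 0)
    (h : ∀ i j, 1 ≤ i → i < j → j ≤ n → x i ≠ x j ∧ x i ≠ - x j) (i : ℕ) (hi : 1 ≤ i) :
    rowEv (rsShape (2 * n) (preMinus n x)) i = rowEv (rsShape (2 * n) (preMinus n (fl x))) i := by
  by_cases hn : 1 ≤ n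
  · have h0' : ∀ i, 1 ≤ i → i ≤ n → fl x i ≠ 0 := by
      intro i h1 h2
      have := h0 i h1 h2
      unfold fl; split_ifs <;> omega
    have h' : ∀ i j, 1 ≤ i → i < j → j ≤ n → fl x i ≠ fl x j ∧ fl x i ≠ - fl x j := by
      intro i j h1 h2 h3
      have := h i j h1 h2 h3
      unfold fl; split_ifs <;> omega
    have i1 := preMinus_inj h0 h
    have i2 := preMinus_inj h0' h'
    by_cases hx : 0 < x 1
    · exact cen_rowEv (pre_cen hn hx) i1 i2 i hi
    · have hx1 := h0 1 le_rfl hn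
      have hx' : 0 < fl x 1 := by simp [fl]; omega
      have hC := pre_cen hn hx'
      rw [fl_fl] at hC
      exact (cen_rowEv hC i2 i1 i hi).symm
  · rw [rsShape_congr (x := preMinus n x) (x' := preMinus n (fl x))]
    intro k
    exact greene_congr (fun i h1 h2 => by omega) k

/-- signed index of a position -/
def pos (n : ℕ) (i : ℕ) : ℤ := if i ≤ n then (i : ℤ) - n - 1 else (i : ℤ) - n

def idx (n : ℕ) (v : ℤ) : ℕ := if v < 0 then (v + n + 1).toNat else (v + n).toNat

lemma pos_mono {n i j : ℕ} (h : i < j) : pos n i < pos n j := by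
  unfold pos; split_ifs <;> omega

lemma idx_mem {n : ℕ} {v : ℤ} (h1 : 1 ≤ |v|) (h2 : |v| ≤ n) : 1 ≤ idx n v ∧ idx n v ≤ 2 * n := by
  unfold idx
  rcases abs_cases v with h | h <;> split_ifs <;> omega

lemma pos_idx {n : ℕ} {v : ℤ} (h1 : 1 ≤ |v|) (h2 : |v| ≤ n) : pos n (idx n v) = v := by
  unfold idx pos
  rcases abs_cases v with h | h <;> split_ifs <;> omega

lemma idx_pos {n i : ℕ} (h1 : 1 ≤ i) : idx n (pos n i) = i := by
  unfold idx pos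
  split_ifs <;> omega

lemma abs_pos' {n i : ℕ} (h1 : 1 ≤ i) (h2 : i ≤ 2 * n) : 1 ≤ |pos n i| ∧ |pos n i| ≤ n := by
  rcases abs_cases (pos n i) with h | h <;> rw [h.1] <;> unfold pos at * <;>
    split_ifs at * <;> omega

lemma pre_eq {n : ℕ} {w : Equiv.Perm ℤ} (hw : IsSignedPerm n w) {i : ℕ} :
    preMinus n (fun k => w (k : ℤ)) i = w (pos n i) := by
  unfold preMinus pos
  split_ifs with h
  · rw [← hw.1]; congr 1
    omega
  · change w ((i - n : ℕ) : ℤ) = _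
    rw [Nat.cast_sub (by omega)]

lemma sp_abs {n : ℕ} {w : Equiv.Perm ℤ} (hw : IsSignedPerm n w) {v : ℤ} (h1 : 1 ≤ |v|)
    (h2 : |v| ≤ n) : 1 ≤ |w v| ∧ |w v| ≤ n := by
  rcases abs_cases v with h | h
  · exact hw.2 v (by omega) (by omega)
  · have := hw.2 (-v) (by omega) (by omega)
    rwa [hw.1, abs_neg] at this

lemma sp_inv {n : ℕ} {w : Equiv.Perm ℤ} (hw : IsSignedPerm n w) : IsSignedPerm n w⁻¹ := by
  refine ⟨fun i => ?_, fun v h1 h2 => ?_⟩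
  · apply w.injective
    rw [hw.1]; simp
  · let B : Finset ℤ := (Finset.Icc (-(n : ℤ)) n).filter (fun v => v ≠ 0)
    have hB : ∀ v, v ∈ B ↔ 1 ≤ |v| ∧ |v| ≤ n := by
      intro v
      simp only [B, Finset.mem_filter, Finset.mem_Icc]
      rcases abs_cases v with h | h <;> omega
    have hsub : B.image w ⊆ B := by
      intro u hu
      obtain ⟨v, hv, rfl⟩ := Finset.mem_image.1 hu
      rw [hB] at hv ⊢
      exact sp_abs hw hv.1 hv.2
    have heq : B.image w = B := Finset.eq_of_subset_of_card_le hsub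
      (Finset.card_image_of_injective _ w.injective).ge
    have hv : v ∈ B := by
      rw [hB, abs_of_pos (by omega)]; exact ⟨h1, h2⟩
    rw [← heq] at hv
    obtain ⟨u, hu, rfl⟩ := Finset.mem_image.1 hv
    simpa using (hB u).1 hu

lemma inv_le {n : ℕ} {w : Equiv.Perm ℤ} (hw : IsSignedPerm n w) (k : ℕ) :
    greeneC (2 * n) (preMinus n (fun k => w (k : ℤ))) k ≤
      greeneC (2 * n) (preMinus n (fun k => w⁻¹ (k : ℤ))) k := by
  have hw' := sp_inv hw
  have hinv : ∀ v, w⁻¹ (w v) = v := fun v => by simp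
  obtain ⟨S, f, hf, hc⟩ := exists_fam (2 * n) (preMinus n (fun k => w (k : ℤ))) k
  have hab : ∀ i ∈ S, 1 ≤ |w (pos n i)| ∧ |w (pos n i)| ≤ n := fun i hi => by
    have h1 := hf.1 i hi
    have h2 := abs_pos' h1.1 h1.2
    exact sp_abs hw h2.1 h2.2
  have hpi : ∀ i ∈ S, pos n (idx n (w (pos n i))) = w (pos n i) := fun i hi =>
    pos_idx (hab i hi).1 (hab i hi).2
  have hback : ∀ i ∈ S, idx n (w⁻¹ (pos n (idx n (w (pos n i))))) = i := fun i hi => by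
    rw [hpi i hi, hinv, idx_pos (hf.1 i hi).1]
  have hcard : (S.image (fun i => idx n (w (pos n i)))).card = S.card := by
    refine Finset.card_image_of_injOn fun i hi j hj he => ?_
    have h1 := hback i hi
    beta_reduce at he
    rw [he, hback j hj] at h1
    exact h1.symm
  rw [← hc, ← hcard]
  refine IsFam.le (f := fun j => f (idx n (w⁻¹ (pos n j)))) ⟨?_, ?_, ?_⟩
  · intro j hj
    obtain ⟨i, hi, rfl⟩ := Finset.mem_image.1 hj
    exact idx_mem (hab i hi).1 (hab i hi).2
  · intro j hj
    obtain ⟨i, hi, rfl⟩ := Finset.mem_image.1 hj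
    beta_reduce
    rw [hback i hi]
    exact hf.2.1 i hi
  · intro j hj j' hj' hlt he
    obtain ⟨i, hi, rfl⟩ := Finset.mem_image.1 hj
    obtain ⟨i', hi', rfl⟩ := Finset.mem_image.1 hj'
    beta_reduce at he
    rw [hback i hi, hback i' hi'] at he
    have h1 := pos_mono (n := n) hlt
    rw [pre_eq hw', pre_eq hw']
    beta_reduce at h1 ⊢
    rw [hpi i hi, hpi i' hi'] at h1 ⊢
    rw [hinv, hinv]
    rcases lt_trichotomy i i' with h | h | h
    · exact (pos_mono h).le
    · rw [h]
    · have := hf.2.2 i' hi' i hi h he.symm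
      rw [pre_eq hw, pre_eq hw] at this
      omega

lemma inv_shape {n : ℕ} {w : Equiv.Perm ℤ} (hw : IsSignedPerm n w) :
    rsShape (2 * n) (preMinus n (fun k => w (k : ℤ))) =
      rsShape (2 * n) (preMinus n (fun k => w⁻¹ (k : ℤ))) :=
  rsShape_congr fun k => le_antisymm (inv_le hw k) (by simpa using inv_le (sp_inv hw) k)

theorem flip_sp {n : ℕ} {w : Equiv.Perm ℤ} (hw : IsSignedPerm n w) (i : ℕ) (hi : 1 ≤ i) :
    rowEv (rsShape (2 * n) (preMinus n (fun k => w (k : ℤ)))) i =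
      rowEv (rsShape (2 * n) (preMinus n (fl (fun k => w (k : ℤ))))) i := by
  refine flip_rowEv ?_ ?_ i hi
  · intro i h1 h2 h
    have := (hw.2 i (by omega) (by omega)).1
    rw [h] at this; simp at this
  · intro i j h1 h2 h3
    refine ⟨fun h => ?_, fun h => ?_⟩
    · have := w.injective h; omega
    · beta_reduce at h
      rw [← hw.1] at h
      have := w.injective h; omega

lemma tw_apply (w : Equiv.Perm ℤ) (v : ℤ) :
    (Equiv.swap (1 : ℤ) (-1) * w) v = if |w v| = 1 then - w v else w v := by
  rw [Equiv.Perm.mul_apply]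
  split_ifs with h
  · rcases (abs_eq (by norm_num)).1 h with h | h <;> rw [h] <;> simp
  · apply Equiv.swap_apply_of_ne_of_ne
    · intro h1; rw [h1] at h; simp at h
    · intro h1; rw [h1] at h; simp at h

end Hollow

/-- for `w ∈ W_n`, the shapes `p(⁻w⃗)`, `p(⁻(tw)⃗)` and `p(⁻(wt)⃗)`
have the same number of even boxes in each row, where `(tw)⃗` flips the sign of the
entry of `w⃗` with absolute value `1` and `(wt)⃗` flips the sign of the first entry. -/
theorem hollow_tableau_sign_invariance (n : ℕ) (w : Equiv.Perm ℤ) (hw : IsSignedPerm n w) :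
    ∀ i, 1 ≤ i →
      rowEv (rsShape (2 * n) (preMinus n (fun k => w (k : ℤ)))) i =
        rowEv (rsShape (2 * n)
          (preMinus n (fun k => if |w (k : ℤ)| = 1 then -w (k : ℤ) else w (k : ℤ)))) i ∧
      rowEv (rsShape (2 * n) (preMinus n (fun k => w (k : ℤ)))) i =
        rowEv (rsShape (2 * n)
          (preMinus n (fun k => if k = 1 then -w (k : ℤ) else w (k : ℤ)))) i := by
  intro i hi
  refine ⟨?_, Hollow.flip_sp hw i hi⟩
  have htw : IsSignedPerm n (Equiv.swap (1 : ℤ) (-1) * w) := by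
    refine ⟨fun v => ?_, fun v h1 h2 => ?_⟩
    · rw [Hollow.tw_apply, Hollow.tw_apply, hw.1, abs_neg]
      split_ifs <;> rfl
    · rw [Hollow.tw_apply]
      have := hw.2 v h1 h2
      split_ifs
      · rwa [abs_neg]
      · exact this
  have e1 : (fun k : ℕ => if |w (k : ℤ)| = 1 then -w (k : ℤ) else w (k : ℤ)) =
      fun k : ℕ => (Equiv.swap (1 : ℤ) (-1) * w) (k : ℤ) := by
    funext k; rw [Hollow.tw_apply]
  have hw' := Hollow.sp_inv hw
  have e2 : (fun k : ℕ => (Equiv.swap (1 : ℤ) (-1) * w)⁻¹ (k : ℤ)) =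
      Hollow.fl (fun k : ℕ => w⁻¹ (k : ℤ)) := by
    funext k
    rw [mul_inv_rev, Equiv.swap_inv, Equiv.Perm.mul_apply]
    unfold Hollow.fl
    split_ifs with h
    · subst h
      rw [← hw'.1]; simp
    · rw [Equiv.swap_apply_of_ne_of_ne (by omega) (by omega)]
  rw [e1, Hollow.inv_shape htw, e2, Hollow.inv_shape hw]
  exact Hollow.flip_sp hw' i hi
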